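/- Fix d ≥ 3 and assume E[Z²] < ∞. There exists C < ∞ such that for all x, y ∈ ℤ^d with x ≠ y, if B(x) and B(y) are independent then E[ |B(x) ∩ B(y)| ] ≤ C |x − y|^{−(d−4)}; consequently q(x,y) := P[ B(x) ∩ B(y) ≠ ∅ ] ≤ C |x − y|^{−(d−4)}. -/

import Mathlib

/-!
Common vocabulary: subgraphs of `ℤ^d` (traces of branching random walks), graph
distance, effective resistance (unit edge resistances, via the Dirichlet variational
principle), cut-bonds and cut-points; plane trees coded by finite words, branching
random walk embeddings, and the (discrete) laws of Galton–Watson trees written by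
their elementary weights.
-/

noncomputable section

open MeasureTheory Filter Topology Set

/-- Points of the lattice `ℤ^d`. -/
abbrev Zd (d : ℕ) := Fin d → ℤ

/-- A (sub)graph of `ℤ^d`, given by its vertex set and its (oriented) edge set. -/
structure LatticeGraph (d : ℕ) where
  verts : Set (Zd d)
  edges : Set (Zd d × Zd d)

namespace LatticeGraph

variable {d : ℕ}

/-- `G.IsPath m f a b` : `f` is a path of `m` steps from `a` to `b` using edges of `G`
(in either orientation). -/
def IsPath (G : LatticeGraph d) (m : ℕ) (f : ℕ → Zd d) (a b : Zd d) : Prop :=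
  f 0 = a ∧ f m = b ∧ ∀ i < m, (f i, f (i + 1)) ∈ G.edges ∨ (f (i + 1), f i) ∈ G.edges

def Connected (G : LatticeGraph d) (a b : Zd d) : Prop :=
  ∃ m f, G.IsPath m f a b

/-- Graph distance in `G` (junk value `0` if `a` and `b` are not connected). -/
noncomputable def dist (G : LatticeGraph d) (a b : Zd d) : ℕ :=
  sInf {m : ℕ | ∃ f, G.IsPath m f a b}

/-- Dirichlet energy of `h` on `G` (unit conductances). -/
noncomputable def energy (G : LatticeGraph d) (h : Zd d → ℝ) : ℝ :=
  ∑' e : G.edges, (h (e : Zd d × Zd d).1 - h (e : Zd d × Zd d).2) ^ 2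

/-- Effective resistance between `a` and `b` in `G` with unit resistances on the
edges, defined through the Dirichlet variational principle. -/
noncomputable def effRes (G : LatticeGraph d) (a b : Zd d) : ℝ :=
  (sInf {r : ℝ | ∃ h : Zd d → ℝ, h a = 1 ∧ h b = 0 ∧ r = G.energy h})⁻¹

def deleteEdge (G : LatticeGraph d) (e : Zd d × Zd d) : LatticeGraph d :=
  ⟨G.verts, G.edges \ {e, (e.2, e.1)}⟩

/-- A cut-bond: an edge whose removal disconnects its endpoints. -/
def IsCutBond (G : LatticeGraph d) (e : Zd d × Zd d) : Prop :=
  e ∈ G.edges ∧ ¬ (G.deleteEdge e).Connected e.1 e.2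

/-- A cut-point: the endpoint of a cut-bond lying on the same side as the root `0`. -/
def IsCutPoint (G : LatticeGraph d) (x : Zd d) : Prop :=
  ∃ e, G.IsCutBond e ∧
    ((x = e.1 ∧ (G.deleteEdge e).Connected 0 e.1) ∨
      (x = e.2 ∧ (G.deleteEdge e).Connected 0 e.2))

/-- `G.Sep c a b` : every path from `a` to `b` in `G` passes through `c`. -/
def Sep (G : LatticeGraph d) (c a b : Zd d) : Prop :=
  ∀ m f, G.IsPath m f a b → ∃ i ≤ m, f i = c

/-- `y` is the first cut-point encountered on any path from `x` to the root `0`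
(with the convention that, if no cut-point separates `x` from `0`, `y` is a cut-point
at minimal graph distance from `0`). -/
def IsFirstCutPointFrom (G : LatticeGraph d) (x y : Zd d) : Prop :=
  (G.IsCutPoint y ∧ G.Sep y x 0 ∧ ∀ z, G.IsCutPoint z → G.Sep z x 0 → G.Sep z y 0) ∨
    ((¬ ∃ z, G.IsCutPoint z ∧ G.Sep z x 0) ∧ G.IsCutPoint y ∧
      ∀ z, G.IsCutPoint z → G.dist 0 y ≤ G.dist 0 z)

/-- The point `π_n(x)` of the paper. -/
noncomputable def firstCutPoint (G : LatticeGraph d) (x : Zd d) : Zd d :=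
  Classical.epsilon (G.IsFirstCutPointFrom x)

end LatticeGraph

/-! ### Plane trees and branching random walk embeddings -/

/-- A (plane) tree as a set of finite words: contains the root, is closed under
taking parents and under taking younger siblings. -/
def IsPlaneTree (t : Set (List ℕ)) : Prop :=
  [] ∈ t ∧ (∀ (w : List ℕ) (k : ℕ), w ++ [k] ∈ t → w ∈ t) ∧
    ∀ (w : List ℕ) (j k : ℕ), j ≤ k → w ++ [k] ∈ t → w ++ [j] ∈ t

/-- Number of children of the vertex `w` in the tree `t`. -/
noncomputable def childCount (t : Set (List ℕ)) (w : List ℕ) : ℕ :=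
  Set.ncard {k : ℕ | w ++ [k] ∈ t}

/-- A nearest-neighbour step of `ℤ^d`. -/
def IsUnitStep {d : ℕ} (v : Zd d) : Prop :=
  ∃ i : Fin d, (∀ j, j ≠ i → v j = 0) ∧ (v i = 1 ∨ v i = -1)

/-- `g` assigns nearest-neighbour increments along the edges of `t`. -/
def IsBRWEmbedding {d : ℕ} (t : Set (List ℕ)) (g : List ℕ → Zd d) : Prop :=
  ∀ w ∈ t, w ≠ [] → IsUnitStep (g w - g w.dropLast)

/-- The trace of the spatial tree `(t, g)`: the subgraph of `ℤ^d` whose vertices are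
the images of the vertices of `t` and whose edges are the images of the edges of `t`. -/
def traceGraph (d : ℕ) (t : Set (List ℕ)) (g : List ℕ → Zd d) : LatticeGraph d :=
  ⟨g '' t, {e | ∃ w ∈ t, w ≠ ([] : List ℕ) ∧ e = (g w.dropLast, g w)}⟩

open scoped ENNReal

/-- The Galton–Watson weight of a finite plane tree `t` for the offspring law `p`:
`∏_{v ∈ t} p(number of children of v)`. -/
noncomputable def gwWeight (p : PMF ℕ) (t : Set (List ℕ)) : ℝ≥0∞ :=
  ∏ᶠ w ∈ t, p (childCount t w)

/-- The weight of a "bush": the root has `Z̃ - 1` children (`Z̃` the size-biased law,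
`P[Z̃ = k] = k p_k`), each of which generates an independent critical Galton–Watson
tree with offspring law `p`. -/
noncomputable def bushWeight (p : PMF ℕ) (t : Set (List ℕ)) : ℝ≥0∞ :=
  ((childCount t [] + 1 : ℕ) : ℝ≥0∞) * p (childCount t [] + 1) *
    ∏ᶠ w ∈ t \ {([] : List ℕ)}, p (childCount t w)

/-! ### Moment conditions on the offspring law -/

def HasMeanOne (p : PMF ℕ) : Prop := ∑' k : ℕ, (k : ℝ) * (p k).toReal = 1

def FiniteSecondMoment (p : PMF ℕ) : Prop :=
  Summable fun k : ℕ => (k : ℝ) ^ 2 * (p k).toReal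

def PosVariance (p : PMF ℕ) : Prop :=
  0 < ∑' k : ℕ, ((k : ℝ) - 1) ^ 2 * (p k).toReal

def HasExpMoment (p : PMF ℕ) : Prop :=
  ∃ lam : ℝ, 0 < lam ∧ Summable fun k : ℕ => Real.exp (lam * k) * (p k).toReal

/-- The offspring distribution is non-lattice (aperiodic). -/
def AperiodicSupport (p : PMF ℕ) : Prop :=
  ∀ m : ℕ, 2 ≤ m → ∃ k : ℕ, p k ≠ 0 ∧ ¬ ((m : ℤ) ∣ ((k : ℤ) - 1))

/-- Standard deviation `σ_Z` of the offspring law (which has mean one). -/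
noncomputable def sigmaZ (p : PMF ℕ) : ℝ :=
  Real.sqrt (∑' k : ℕ, ((k : ℝ) - 1) ^ 2 * (p k).toReal)

/-- Euclidean distance on `ℤ^d`. -/
noncomputable def euclDist {d : ℕ} (x y : Zd d) : ℝ :=
  Real.sqrt (∑ i, ((x i : ℝ) - (y i : ℝ)) ^ 2)

/-!
STATEMENT 14.  Two independent bushes `B(x)`, `B(y)` rooted at `x` and `y`:
the root of each modified tree has `Z̃ - 1` offspring, each generating an independent
critical Galton–Watson tree with offspring law `p`; the embeddings assign independent
uniform nearest-neighbour increments along the edges.  The joint law is completely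
specified by `hlaw` (product of the two bush laws).
-/
structure TwoBushModel (d : ℕ) (p : PMF ℕ) (x y : Zd d) where
  Ω : Type
  mΩ : MeasurableSpace Ω
  P : @Measure Ω mΩ
  hP : IsProbabilityMeasure P
  tree1 : Ω → Set (List ℕ)
  tree2 : Ω → Set (List ℕ)
  emb1 : Ω → List ℕ → Zd d
  emb2 : Ω → List ℕ → Zd d
  htree1 : ∀ ω, IsPlaneTree (tree1 ω) ∧ (tree1 ω).Finite
  htree2 : ∀ ω, IsPlaneTree (tree2 ω) ∧ (tree2 ω).Finite
  hroot1 : ∀ ω, emb1 ω ([] : List ℕ) = x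
  hroot2 : ∀ ω, emb2 ω ([] : List ℕ) = y
  hemb1 : ∀ ω, IsBRWEmbedding (tree1 ω) (emb1 ω)
  hemb2 : ∀ ω, IsBRWEmbedding (tree2 ω) (emb2 ω)
  hlaw : ∀ t1 t2 : Set (List ℕ), IsPlaneTree t1 → t1.Finite → IsPlaneTree t2 → t2.Finite →
    ∀ g1 g2 : List ℕ → Zd d,
      g1 ([] : List ℕ) = x → IsBRWEmbedding t1 g1 →
      g2 ([] : List ℕ) = y → IsBRWEmbedding t2 g2 →
    P {ω | tree1 ω = t1 ∧ (∀ v ∈ t1, emb1 ω v = g1 v) ∧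
        tree2 ω = t2 ∧ ∀ v ∈ t2, emb2 ω v = g2 v}
      = bushWeight p t1 * bushWeight p t2 *
          ((2 * d : ℕ) : ℝ≥0∞)⁻¹ ^ (t1.ncard - 1 + (t2.ncard - 1))


/-! ### Part A : discrete superharmonic functions -/

lemma twice_int (φ φ1 φ2 : ℝ → ℝ) (a b c : ℝ)
    (h1 : ∀ y ∈ Icc (0:ℝ) (1/2), HasDerivAt φ (φ1 y) y)
    (h2 : ∀ y ∈ Icc (0:ℝ) (1/2), HasDerivAt φ1 (φ2 y) y)
    (h3 : ∀ y ∈ Icc (0:ℝ) (1/2), φ2 y ≤ a + b * y ^ 2)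
    (h10 : φ1 0 = 0) (h00 : φ 0 = c) :
    ∀ y ∈ Icc (0:ℝ) (1/2), φ y ≤ c + a * y ^ 2 / 2 + b * y ^ 4 / 12 := by
  have key : ∀ (G G' : ℝ → ℝ), (∀ y ∈ Icc (0:ℝ) (1/2), HasDerivAt G (G' y) y) →
      (∀ y ∈ Icc (0:ℝ) (1/2), 0 ≤ G' y) → 0 ≤ G 0 → ∀ y ∈ Icc (0:ℝ) (1/2), 0 ≤ G y := by
    intro G G' hG hG' h0 y hy
    have : MonotoneOn G (Icc (0:ℝ) (1/2)) := by
      apply monotoneOn_of_deriv_nonneg (convex_Icc _ _)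
      · intro z hz; exact (hG z hz).continuousAt.continuousWithinAt
      · intro z hz
        exact (hG z (interior_subset hz)).differentiableAt.differentiableWithinAt
      · intro z hz
        rw [(hG z (interior_subset hz)).deriv]
        exact hG' z (interior_subset hz)
    exact h0.trans (this ⟨le_refl _, by norm_num⟩ hy hy.1)
  have s1 : ∀ y ∈ Icc (0:ℝ) (1/2), 0 ≤ a * y + b * y ^ 3 / 3 - φ1 y := by
    apply key (fun y => a * y + b * y ^ 3 / 3 - φ1 y) (fun y => a + b * y ^ 2 - φ2 y)
    · intro y hy
      have := ((((hasDerivAt_id y).const_mul a).add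
        (((hasDerivAt_pow 3 y).const_mul b).div_const 3)).sub (h2 y hy))
      exact this.congr_deriv (by norm_num; ring)
    · intro y hy; have := h3 y hy; linarith
    · simp [h10]
  intro y hy
  have := key (fun y => c + a * y ^ 2 / 2 + b * y ^ 4 / 12 - φ y)
    (fun y => a * y + b * y ^ 3 / 3 - φ1 y) (by
      intro y hy
      have := ((((hasDerivAt_pow 2 y).const_mul a).div_const 2).const_add c).add
        (((hasDerivAt_pow 4 y).const_mul b).div_const 12) |>.sub (h1 y hy)
      exact this.congr_deriv (by norm_num; ring)) s1 (by simp [h00]) y hy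
  linarith

lemma phi_deriv (s y : ℝ) (hy : y ∈ Icc (0:ℝ) (1/2)) :
    HasDerivAt (fun y : ℝ => (1 + y) ^ (-s) + (1 - y) ^ (-s))
      (-s * ((1 + y) ^ (-s - 1) - (1 - y) ^ (-s - 1))) y := by
  have p1 : (1 + y) ≠ 0 := by have := hy.1; linarith
  have p2 : (1 - y) ≠ 0 := by have := hy.2; intro h; linarith
  have a1 := ((hasDerivAt_id y).const_add 1).rpow_const (p := -s) (Or.inl p1)
  have a2 := ((hasDerivAt_id y).const_sub 1).rpow_const (p := -s) (Or.inl p2)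
  exact (a1.add a2).congr_deriv (by simp; ring)

lemma phi_deriv2 (s y : ℝ) (hy : y ∈ Icc (0:ℝ) (1/2)) :
    HasDerivAt (fun y : ℝ => -s * ((1 + y) ^ (-s - 1) - (1 - y) ^ (-s - 1)))
      (s * (s + 1) * ((1 + y) ^ (-(s + 2)) + (1 - y) ^ (-(s + 2)))) y := by
  have p1 : (1 + y) ≠ 0 := by have := hy.1; linarith
  have p2 : (1 - y) ≠ 0 := by have := hy.2; intro h; linarith
  have a1 := ((hasDerivAt_id y).const_add 1).rpow_const (p := -s - 1) (Or.inl p1)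
  have a2 := ((hasDerivAt_id y).const_sub 1).rpow_const (p := -s - 1) (Or.inl p2)
  have : -s - 1 - 1 = -(s + 2) := by ring
  exact ((a1.sub a2).const_mul (-s)).congr_deriv (by simp [this]; ring)

lemma phi_crude (s : ℝ) (hs : 0 ≤ s) : ∀ y ∈ Icc (0:ℝ) (1/2),
    (1 + y) ^ (-s) + (1 - y) ^ (-s) ≤ 2 * 2 ^ s := by
  intro y hy
  have e : ∀ z : ℝ, 1/2 ≤ z → z ^ (-s) ≤ 2 ^ s := by
    intro z hz
    have : z ^ (-s) ≤ (1/2 : ℝ) ^ (-s) :=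
      Real.rpow_le_rpow_of_nonpos (by norm_num) hz (by linarith)
    refine this.trans (le_of_eq ?_)
    rw [one_div, Real.inv_rpow (by norm_num), Real.rpow_neg (by norm_num), inv_inv]
  have := e (1 + y) (by have := hy.1; linarith)
  have := e (1 - y) (by have := hy.2; linarith)
  linarith

lemma phi_bound (s : ℝ) (hs : 0 ≤ s) : ∃ K : ℝ, 0 ≤ K ∧ ∀ y : ℝ, |y| ≤ 1/2 →
    (1 + y) ^ (-s) + (1 - y) ^ (-s) ≤ 2 + s * (s + 1) * y ^ 2 + K * y ^ 4 := by
  have st1 : ∀ s : ℝ, 0 ≤ s → ∃ M : ℝ, 0 ≤ M ∧ ∀ y ∈ Icc (0:ℝ) (1/2),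
      (1 + y) ^ (-s) + (1 - y) ^ (-s) ≤ 2 + M * y ^ 2 := by
    intro s hs
    refine ⟨s * (s + 1) * (2 * 2 ^ (s + 2)) / 2, by positivity, ?_⟩
    intro y hy
    have := twice_int _ _ _ (s * (s + 1) * (2 * 2 ^ (s + 2))) 0 2 (phi_deriv s) (phi_deriv2 s)
      (by
        intro y hy
        have := phi_crude (s + 2) (by linarith) y hy
        have h0 : 0 ≤ s * (s + 1) := by positivity
        nlinarith [mul_le_mul_of_nonneg_left this h0]) (by simp) (by norm_num) y hy
    linarith
  obtain ⟨M, hM, h⟩ := st1 (s + 2) (by linarith)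
  refine ⟨s * (s + 1) * M / 12, by positivity, ?_⟩
  have pos : ∀ y ∈ Icc (0:ℝ) (1/2), (1 + y) ^ (-s) + (1 - y) ^ (-s)
      ≤ 2 + s * (s + 1) * y ^ 2 + s * (s + 1) * M / 12 * y ^ 4 := by
    intro y hy
    have := twice_int _ _ _ (s * (s + 1) * 2) (s * (s + 1) * M) 2 (phi_deriv s) (phi_deriv2 s)
      (by
        intro y hy
        have := h y hy
        have h0 : 0 ≤ s * (s + 1) := by positivity
        nlinarith [mul_le_mul_of_nonneg_left this h0]) (by simp) (by norm_num) y hy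
    linarith
  intro y hy
  rcases le_total 0 y with h0 | h0
  · exact pos y ⟨h0, by rwa [abs_of_nonneg h0] at hy⟩
  · have := pos (-y) ⟨by linarith, by rwa [abs_of_nonpos h0] at hy⟩
    have e4 : (-y) ^ 4 = y ^ 4 := by ring
    have e2 : (-y) ^ 2 = y ^ 2 := by ring
    rw [e4, e2, sub_neg_eq_add, ← sub_eq_add_neg] at this
    linarith

/-- Directions. -/
abbrev Dir (d : ℕ) := Fin d × Bool

def stepv {d : ℕ} (e : Dir d) : Zd d := Pi.single e.1 (if e.2 then 1 else -1)

def sqn {d : ℕ} (x : Zd d) : ℝ := ∑ i, (x i : ℝ) ^ 2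

lemma sqn_step {d : ℕ} (x : Zd d) (e : Dir d) :
    sqn (x + stepv e) = sqn x + 1 + (if e.2 then 2 else -2) * (x e.1 : ℝ) := by
  have h : ∀ i, (((x + stepv e) i : ℤ) : ℝ) ^ 2 = (x i : ℝ) ^ 2 +
      (if i = e.1 then 1 + (if e.2 then 2 else -2) * (x e.1 : ℝ) else 0) := by
    intro i
    simp only [stepv, Pi.add_apply]
    by_cases hi : i = e.1
    · subst hi
      cases e.2 <;> simp <;> ring
    · simp [hi]
  unfold sqn
  rw [Finset.sum_congr rfl (fun i _ => h i), Finset.sum_add_distrib]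
  simp
  ring

lemma sqn_nonneg {d : ℕ} (x : Zd d) : 0 ≤ sqn x := Finset.sum_nonneg fun _ _ => sq_nonneg _

lemma avg_bound {d : ℕ} (hd : 0 < d) (s : ℝ) (hs : 0 ≤ s) : ∃ K : ℝ, 0 ≤ K ∧
    ∀ A : ℝ, 3 ≤ A → ∀ x : Zd d,
      ((2 * d : ℕ) : ℝ)⁻¹ * ∑ e : Dir d, (sqn (x + stepv e) + A) ^ (-s) ≤
        (sqn x + A + 1) ^ (-s) * (1 + 2 * s * (s + 1) / d * sqn x / (sqn x + A + 1) ^ 2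
          + K / (sqn x + A + 1) ^ 2) := by
  obtain ⟨K, hK, hb⟩ := phi_bound s hs
  refine ⟨8 * K / d, by positivity, ?_⟩
  intro A hA x
  set ρ := sqn x + A + 1 with hρ
  have hq := sqn_nonneg x
  have hρ0 : 0 < ρ := by linarith
  have hxi : ∀ i, (x i : ℝ) ^ 2 ≤ sqn x := fun i =>
    Finset.single_le_sum (f := fun i => (x i : ℝ) ^ 2) (fun _ _ => sq_nonneg _) (Finset.mem_univ i)
  have hd' : (0:ℝ) < d := by exact_mod_cast hd
  have t1 : ∀ i : Fin d, (ρ + 2 * (x i : ℝ)) ^ (-s) + (ρ - 2 * (x i : ℝ)) ^ (-s) ≤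
      ρ ^ (-s) * (2 + 4 * s * (s + 1) / ρ ^ 2 * (x i : ℝ) ^ 2
        + 16 * K / ρ ^ 4 * ((x i : ℝ) ^ 2 * sqn x)) := by
    intro i
    have hy : |2 * (x i : ℝ) / ρ| ≤ 1/2 := by
      rw [abs_div, abs_of_pos hρ0, div_le_iff₀ hρ0]
      have := hxi i
      rw [abs_le]
      constructor <;> nlinarith [sq_nonneg ((x i : ℝ) - 2), sq_nonneg ((x i : ℝ) + 2)]
    have := hb _ hy
    rw [abs_le] at hy
    have e1 : ρ + 2 * (x i : ℝ) = ρ * (1 + 2 * (x i : ℝ) / ρ) := by field_simp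
    have e2 : ρ - 2 * (x i : ℝ) = ρ * (1 - 2 * (x i : ℝ) / ρ) := by field_simp
    rw [e1, e2, Real.mul_rpow hρ0.le (by linarith), Real.mul_rpow hρ0.le (by linarith), ← mul_add]
    apply mul_le_mul_of_nonneg_left _ (by positivity)
    refine this.trans ?_
    have h4 : (x i : ℝ) ^ 4 ≤ (x i : ℝ) ^ 2 * sqn x := by
      nlinarith [hxi i, sq_nonneg (x i : ℝ)]
    have : K * (2 * (x i : ℝ) / ρ) ^ 4 = 16 * K / ρ ^ 4 * (x i : ℝ) ^ 4 := by ring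
    rw [this]
    have : 16 * K / ρ ^ 4 * (x i : ℝ) ^ 4 ≤ 16 * K / ρ ^ 4 * ((x i : ℝ) ^ 2 * sqn x) :=
      mul_le_mul_of_nonneg_left h4 (by positivity)
    have e3 : s * (s + 1) * (2 * (x i : ℝ) / ρ) ^ 2 = 4 * s * (s + 1) / ρ ^ 2 * (x i : ℝ) ^ 2 := by
      ring
    linarith
  have t2 : ∑ e : Dir d, (sqn (x + stepv e) + A) ^ (-s) ≤
      ρ ^ (-s) * (2 * d + 4 * s * (s + 1) / ρ ^ 2 * sqn x + 16 * K / ρ ^ 4 * (sqn x * sqn x)) := by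
    rw [Fintype.sum_prod_type]
    calc _ = ∑ i : Fin d, ((ρ + 2 * (x i : ℝ)) ^ (-s) + (ρ - 2 * (x i : ℝ)) ^ (-s)) := by
            apply Finset.sum_congr rfl
            intro i _
            simp only [Fintype.sum_bool, sqn_step, hρ]
            congr 2 <;> simp <;> ring
      _ ≤ ∑ i : Fin d, _ := Finset.sum_le_sum fun i _ => t1 i
      _ = _ := by
            rw [← Finset.mul_sum, Finset.sum_add_distrib, Finset.sum_add_distrib,
              ← Finset.mul_sum, ← Finset.mul_sum, ← Finset.sum_mul]
            simp only [sqn, Finset.sum_const, Finset.card_univ, Fintype.card_fin, nsmul_eq_mul]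
            ring
  have t3 : 16 * K / ρ ^ 4 * (sqn x * sqn x) ≤ 16 * K / ρ ^ 2 := by
    have : sqn x * sqn x ≤ ρ ^ 2 := by nlinarith
    calc _ ≤ 16 * K / ρ ^ 4 * ρ ^ 2 := mul_le_mul_of_nonneg_left this (by positivity)
      _ = _ := by field_simp
  calc _ ≤ ((2 * d : ℕ) : ℝ)⁻¹ * (ρ ^ (-s) * (2 * d + 4 * s * (s + 1) / ρ ^ 2 * sqn x
            + 16 * K / ρ ^ 2)) := by
          apply mul_le_mul_of_nonneg_left _ (by positivity)
          refine t2.trans (mul_le_mul_of_nonneg_left ?_ (by positivity))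
          linarith
    _ = _ := by
          push_cast
          field_simp
          ring

lemma rho_bern (s ρ : ℝ) (hs : 0 ≤ s) (hρ : 2 ≤ ρ) :
    ρ ^ (-s) * (1 + s / ρ) ≤ (ρ - 1) ^ (-s) := by
  have e : ρ - 1 = ρ * (1 - 1 / ρ) := by field_simp
  have h1 : 1 / ρ ≤ 1/2 := by
    apply one_div_le_one_div_of_le <;> linarith
  have h1' : 0 < 1 / ρ := by positivity
  rw [e, Real.mul_rpow (by linarith) (by linarith)]
  apply mul_le_mul_of_nonneg_left _ (by positivity)
  have h2 : Real.log (1 - 1 / ρ) ≤ - (1 / ρ) := by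
    have := Real.log_le_sub_one_of_pos (show 0 < 1 - 1 / ρ by linarith)
    linarith
  rw [Real.rpow_def_of_pos (by linarith)]
  have h3 : s / ρ ≤ Real.log (1 - 1 / ρ) * -s := by
    have : s / ρ = s * (1 / ρ) := by ring
    rw [this]; nlinarith
  have := Real.add_one_le_exp (s / ρ)
  have := Real.exp_le_exp.2 h3
  linarith

/-- The two superharmonic functions. -/
lemma super_real (d : ℕ) (hd : 5 ≤ d) : ∃ A c : ℝ, 1 ≤ A ∧ 0 < c ∧
    (∀ x : Zd d, ((2 * d : ℕ) : ℝ)⁻¹ * ∑ e : Dir d, (sqn (x + stepv e) + A) ^ (-(((d:ℝ) - 2) / 2))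
        + c * (if x = 0 then 1 else 0) ≤ (sqn x + A) ^ (-(((d:ℝ) - 2) / 2))) ∧
    (∀ x : Zd d, ((2 * d : ℕ) : ℝ)⁻¹ * ∑ e : Dir d, (sqn (x + stepv e) + A) ^ (-(((d:ℝ) - 4) / 2))
        + c * (sqn x + A) ^ (-(((d:ℝ) - 2) / 2)) ≤ (sqn x + A) ^ (-(((d:ℝ) - 4) / 2))) := by
  have hd5 : (5:ℝ) ≤ d := by exact_mod_cast hd
  have hd0 : 0 < d := by omega
  set s : ℝ := ((d:ℝ) - 4) / 2 with hs
  have hs0 : 0 < s := by rw [hs]; linarith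
  have hs1 : ((d:ℝ) - 2) / 2 = s + 1 := by rw [hs]; ring
  rw [hs1]
  have hds : (d:ℝ) = 2 * (s + 2) := by rw [hs]; ring
  obtain ⟨K1, hK1, h1⟩ := avg_bound hd0 (s + 1) (by linarith)
  obtain ⟨K2, hK2, h2⟩ := avg_bound hd0 s hs0.le
  set A : ℝ := 3 + K1 + d * K2 / s with hA
  have hdk : 0 ≤ d * K2 / s := by positivity
  have hA3 : 3 ≤ A := by linarith
  set c1 : ℝ := (A + 1) ^ (-(s + 1)) / (A + 1) ^ 2 with hc1
  set c2 : ℝ := s / d * 2 ^ (-(s + 1)) with hc2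
  have hc1p : 0 < c1 := by positivity
  have hc2p : 0 < c2 := by positivity
  refine ⟨A, min c1 c2, by linarith, lt_min hc1p hc2p, ?_, ?_⟩
  · intro x
    have hq := sqn_nonneg x
    have b := rho_bern (s + 1) (sqn x + A + 1) (by linarith) (by linarith)
    have a := h1 A hA3 x
    rw [add_sub_cancel_right] at b
    set ρ := sqn x + A + 1 with hρ
    have hρ0 : 0 < ρ := by linarith
    have key : ρ ^ (-(s + 1)) * (1 + 2 * (s + 1) * (s + 1 + 1) / d * sqn x / ρ ^ 2 + K1 / ρ ^ 2)
        + ρ ^ (-(s + 1)) * (1 / ρ ^ 2) ≤ ρ ^ (-(s + 1)) * (1 + (s + 1) / ρ) := by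
      rw [← mul_add]
      apply mul_le_mul_of_nonneg_left _ (by positivity)
      have e1 : 2 * (s + 1) * (s + 1 + 1) / (d:ℝ) = s + 1 := by rw [hds]; field_simp; ring
      rw [e1]
      have : (s + 1) / ρ - ((s + 1) * sqn x / ρ ^ 2 + K1 / ρ ^ 2 + 1 / ρ ^ 2) =
          ((s + 1) * (A + 1) - K1 - 1) / ρ ^ 2 := by
        have : sqn x = ρ - A - 1 := by rw [hρ]; ring
        rw [this]; field_simp; ring
      have : 0 ≤ ((s + 1) * (A + 1) - K1 - 1) / ρ ^ 2 := by
        apply div_nonneg _ (by positivity)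
        nlinarith
      linarith
    have last : min c1 c2 * (if x = 0 then 1 else 0) ≤ ρ ^ (-(s + 1)) * (1 / ρ ^ 2) := by
      split_ifs with hx
      · have : sqn x = 0 := by subst hx; simp [sqn]
        rw [hρ, this, zero_add, mul_one, mul_one_div]
        exact min_le_left _ _
      · rw [mul_zero]; positivity
    linarith
  · intro x
    have hq := sqn_nonneg x
    have b := rho_bern s (sqn x + A + 1) hs0.le (by linarith)
    have a := h2 A hA3 x
    rw [add_sub_cancel_right] at b
    set ρ := sqn x + A + 1 with hρ
    have hρ0 : 0 < ρ := by linarith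
    have key : ρ ^ (-s) * (1 + 2 * s * (s + 1) / d * sqn x / ρ ^ 2 + K2 / ρ ^ 2)
        + ρ ^ (-s) * (s / d / ρ) ≤ ρ ^ (-s) * (1 + s / ρ) := by
      rw [← mul_add]
      apply mul_le_mul_of_nonneg_left _ (by positivity)
      have i1 : 2 * s * (s + 1) / d * sqn x / ρ ^ 2 ≤ 2 * s * (s + 1) / d / ρ := by
        calc _ ≤ 2 * s * (s + 1) / d * ρ / ρ ^ 2 := by gcongr; linarith
          _ = _ := by field_simp
      have i2 : K2 / ρ ^ 2 ≤ s / d / ρ := by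
        rw [div_le_div_iff₀ (by positivity) hρ0, pow_two, ← mul_assoc]
        apply mul_le_mul_of_nonneg_right _ hρ0.le
        have : d * K2 / s ≤ ρ := by linarith
        rw [div_le_iff₀ hs0] at this
        rw [div_mul_eq_mul_div, le_div_iff₀ (by positivity)]
        linarith
      have i3 : 2 * s * (s + 1) / d / ρ + s / d / ρ + s / d / ρ = s / ρ := by
        rw [hds]; field_simp; ring
      linarith
    have last : min c1 c2 * (sqn x + A) ^ (-(s + 1)) ≤ ρ ^ (-s) * (s / d / ρ) := by
      have i1 : ρ ^ (-s) * (s / d / ρ) = s / d * ρ ^ (-(s + 1)) := by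
        rw [neg_add, Real.rpow_add hρ0, Real.rpow_neg_one]; ring
      rw [i1]
      have i2 : 2 ^ (-(s + 1)) * (sqn x + A) ^ (-(s + 1)) ≤ ρ ^ (-(s + 1)) := by
        rw [← Real.mul_rpow (by norm_num) (by linarith)]
        apply Real.rpow_le_rpow_of_nonpos hρ0 (by linarith) (by linarith)
      calc _ ≤ c2 * (sqn x + A) ^ (-(s + 1)) := by
              apply mul_le_mul_of_nonneg_right (min_le_right _ _)
              apply Real.rpow_nonneg; linarith
        _ = s / d * (2 ^ (-(s + 1)) * (sqn x + A) ^ (-(s + 1))) := by rw [hc2]; ring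
        _ ≤ _ := by gcongr
    linarith

/-! ### Part B : spatial trees as an inductive type, and recursions for hitting sums -/

inductive SpT (d : ℕ) : Type
  | node (k : ℕ) (dir : Fin k → Dir d) (sub : Fin k → SpT d) : SpT d

namespace SpT

variable {d : ℕ}

def equivSig : SpT d ≃ Σ k : ℕ, (Fin k → Dir d × SpT d) where
  toFun S := match S with
    | node k e c => ⟨k, fun i => (e i, c i)⟩
  invFun x := node x.1 (fun i => (x.2 i).1) (fun i => (x.2 i).2)
  left_inv S := by cases S; rfl
  right_inv x := by rfl

def toW : SpT d → WType (fun a : (Σ k : ℕ, (Fin k → Dir d)) => Fin a.1)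
  | node k e c => WType.mk ⟨k, e⟩ (fun i => toW (c i))

lemma toW_inj : ∀ S T : SpT d, toW S = toW T → S = T := by
  intro S
  induction S with
  | node k e c ih =>
    intro T h
    cases T with
    | node k' e' c' =>
      simp only [toW, WType.mk.injEq, Sigma.mk.injEq] at h
      obtain ⟨⟨h1, h2⟩, h3⟩ := h
      subst h1
      obtain rfl := eq_of_heq h2
      have h3 := eq_of_heq h3
      congr
      funext i
      exact ih i _ (congrFun h3 i)

instance : Countable (SpT d) :=
  Function.Injective.countable (f := toW) (fun S T h => toW_inj S T h)

/-- Trace of the spatial tree, with root at the origin. -/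
def tr : SpT d → Set (Zd d)
  | node _ e c => {z | z = 0 ∨ ∃ i, z - stepv (e i) ∈ tr (c i)}

def Wt (p : ℕ → ℝ≥0∞) (q : ℝ≥0∞) : ℕ → SpT d → ℝ≥0∞
  | 0, _ => 0
  | n + 1, node k _ c => p k * ∏ i, (q * Wt p q n (c i))

def RW (p : ℕ → ℝ≥0∞) (q : ℝ≥0∞) (r : ℕ → ℝ≥0∞) (n : ℕ) : SpT d → ℝ≥0∞
  | node k _ c => r k * ∏ i, (q * Wt p q n (c i))

lemma Wt_succ (p : ℕ → ℝ≥0∞) (q : ℝ≥0∞) (n : ℕ) (S : SpT d) :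
    Wt p q (n + 1) S = RW p q p n S := by cases S; rfl

lemma Wt_mono (p : ℕ → ℝ≥0∞) (q : ℝ≥0∞) (n : ℕ) : ∀ S : SpT d, Wt p q n S ≤ Wt p q (n + 1) S := by
  induction n with
  | zero => intro S; simp [Wt]
  | succ n ih =>
    intro S
    cases S with
    | node k e c =>
      rw [Wt, Wt]
      gcongr with i
      exact ih _

end SpT

open SpT

open Classical in
def ind {α : Type*} (s : Set α) (x : α) : ℝ≥0∞ := if x ∈ s then 1 else 0

lemma ind_le {α : Type*} (s : Set α) (x : α) : ind s x ≤ 1 := by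
  unfold ind; split_ifs <;> simp

lemma ind_congr {α β : Type*} {s : Set α} {t : Set β} {x : α} {y : β} (h : x ∈ s ↔ y ∈ t) :
    ind s x = ind t y := by
  unfold ind
  by_cases h1 : x ∈ s
  · rw [if_pos h1, if_pos (h.1 h1)]
  · rw [if_neg h1, if_neg (fun h2 => h1 (h.2 h2))]

lemma ind_of_mem {α : Type*} {s : Set α} {x : α} (h : x ∈ s) : ind s x = 1 := if_pos h

lemma ind_of_notMem {α : Type*} {s : Set α} {x : α} (h : x ∉ s) : ind s x = 0 := if_neg h

section tensor

variable {X : Type*}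

lemma tsum_fin_succ (k : ℕ) (F : (Fin (k + 1) → X) → ℝ≥0∞) :
    ∑' x, F x = ∑' x0 : X, ∑' x : Fin k → X, F (Fin.cons x0 x) := by
  rw [← (Fin.consEquiv (fun _ : Fin (k + 1) => X)).tsum_eq F, ENNReal.tsum_prod']
  rfl

lemma tsum_fin_zero (F : (Fin 0 → X) → ℝ≥0∞) : ∑' x, F x = F Fin.elim0 := by
  rw [tsum_eq_single Fin.elim0]
  intro b hb
  exact absurd (Subsingleton.elim _ _) hb

lemma tensor_total (a : X → ℝ≥0∞) (k : ℕ) :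
    ∑' x : Fin k → X, ∏ i, a (x i) = (∑' x, a x) ^ k := by
  induction k with
  | zero => rw [tsum_fin_zero]; simp
  | succ k ih =>
    rw [tsum_fin_succ]
    simp only [Fin.prod_univ_succ, Fin.cons_zero, Fin.cons_succ]
    simp_rw [ENNReal.tsum_mul_left, ih, ENNReal.tsum_mul_right, pow_succ']

def Hk (a : X → ℝ≥0∞) (E : Set X) (k : ℕ) : ℝ≥0∞ :=
  ∑' x : Fin k → X, (∏ i, a (x i)) * ind {x : Fin k → X | ∃ i, x i ∈ E} x

lemma Hk_zero (a : X → ℝ≥0∞) (E : Set X) : Hk a E 0 = 0 := by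
  unfold Hk; rw [tsum_fin_zero]; simp [ind]

lemma Hk_succ (a : X → ℝ≥0∞) (E : Set X) (k : ℕ) :
    Hk a E (k + 1) = (∑' x, a x * ind E x) * (∑' x, a x) ^ k
      + (∑' x, a x * ind Eᶜ x) * Hk a E k := by
  unfold Hk
  rw [tsum_fin_succ, ← tensor_total, ← ENNReal.tsum_mul_right, ← ENNReal.tsum_mul_right,
    ← ENNReal.tsum_add]
  congr 1; funext x0
  rw [← ENNReal.tsum_mul_left, ← ENNReal.tsum_mul_left, ← ENNReal.tsum_add]
  congr 1; funext x
  simp only [Fin.prod_univ_succ, Fin.cons_zero, Fin.cons_succ]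
  by_cases h : x0 ∈ E
  · rw [ind_of_mem h, ind_of_notMem (s := Eᶜ) (by simpa using h), ind_of_mem]
    · simp
    · exact ⟨0, by simpa using h⟩
  · rw [ind_of_notMem h, ind_of_mem (s := Eᶜ) h,
      ind_congr (t := {x : Fin k → X | ∃ i, x i ∈ E}) (y := x)]
    · simp [mul_assoc]
    · constructor
      · rintro ⟨i, hi⟩
        induction i using Fin.cases with
        | zero => exact absurd (by simpa using hi) h
        | succ i => exact ⟨i, by simpa using hi⟩
      · rintro ⟨i, hi⟩
        exact ⟨i.succ, by simpa using hi⟩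

lemma ind_compl (a : X → ℝ≥0∞) (E : Set X) :
    (∑' x, a x * ind E x) + (∑' x, a x * ind Eᶜ x) = ∑' x, a x := by
  rw [← ENNReal.tsum_add]
  congr 1; funext x
  by_cases h : x ∈ E <;> simp [ind, h]

lemma Hk_bound (a : X → ℝ≥0∞) (E : Set X) (hA : ∑' x, a x ≤ 1) (k : ℕ) :
    Hk a E k + (if 2 ≤ k then (∑' x, a x * ind E x) ^ 2 else 0) ≤ k * (∑' x, a x * ind E x) := by
  have hc := ind_compl a E
  set h := ∑' x, a x * ind E x
  set b := ∑' x, a x * ind Eᶜ x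
  set A := ∑' x, a x
  have hb : b ≤ 1 := (le_add_self.trans hc.le).trans hA
  have H1 : Hk a E 1 = h := by rw [Hk_succ, Hk_zero]; simp [h]
  match k with
  | 0 => simp [Hk_zero]
  | 1 => rw [H1]; simp
  | k + 2 =>
    induction k with
    | zero =>
      have : Hk a E 2 = h * A + b * h := by
        rw [Hk_succ, H1]; simp [h, A, b]
      simp only [zero_add, this, le_refl, if_true]
      calc h * A + b * h + h ^ 2 = h * A + h * (h + b) := by ring
        _ = 2 * (h * A) := by rw [hc]; ring
        _ ≤ 2 * (h * 1) := by gcongr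
        _ = _ := by simp
    | succ k ih =>
      rw [Hk_succ]
      simp only [show 2 ≤ k + 1 + 2 by omega, show 2 ≤ k + 2 by omega, if_true] at ih ⊢
      calc h * A ^ (k + 2) + b * Hk a E (k + 2) + h ^ 2
          ≤ h * 1 + 1 * Hk a E (k + 2) + h ^ 2 := by
            gcongr; exact pow_le_one₀ (zero_le) hA
        _ = h + (Hk a E (k + 2) + h ^ 2) := by ring
        _ ≤ h + ((k + 2 : ℕ) : ℝ≥0∞) * h := by gcongr
        _ = _ := by push_cast; ring

lemma Hk_le_total (a : X → ℝ≥0∞) (E : Set X) (hA : ∑' x, a x ≤ 1) (k : ℕ) : Hk a E k ≤ 1 := by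
  calc Hk a E k ≤ ∑' x : Fin k → X, ∏ i, a (x i) := by
        apply ENNReal.tsum_le_tsum; intro x
        exact mul_le_of_le_one_right (zero_le) (ind_le _ _)
    _ = _ := tensor_total a k
    _ ≤ 1 := pow_le_one₀ (zero_le) hA

end tensor

section recursion

variable {d : ℕ}

def qd (d : ℕ) : ℝ≥0∞ := ((2 * d : ℕ) : ℝ≥0∞)⁻¹

def Pop (f : Zd d → ℝ≥0∞) (z : Zd d) : ℝ≥0∞ := qd d * ∑ e : Dir d, f (z + stepv e)

def dl (z : Zd d) : ℝ≥0∞ := ind {0} z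

lemma Pop_mono {f g : Zd d → ℝ≥0∞} (h : ∀ z, f z ≤ g z) (z : Zd d) : Pop f z ≤ Pop g z := by
  unfold Pop; gcongr; exact h _

lemma stepv_neg (e : Dir d) : stepv (e.1, !e.2) = - stepv e := by
  unfold stepv
  rw [← Pi.single_neg]
  cases h : e.2 <;> simp

def flipDir : Dir d ≃ Dir d where
  toFun e := (e.1, !e.2)
  invFun e := (e.1, !e.2)
  left_inv e := by simp
  right_inv e := by simp

lemma sum_flip (F : Zd d → ℝ≥0∞) : ∑ e : Dir d, F (- stepv e) = ∑ e : Dir d, F (stepv e) := by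
  rw [← Equiv.sum_comp flipDir (fun e => F (stepv e))]
  apply Finset.sum_congr rfl
  intro e _
  simp [flipDir, stepv_neg]

lemma Pop_sub (f : Zd d → ℝ≥0∞) (z : Zd d) : Pop f z = qd d * ∑ e : Dir d, f (z - stepv e) := by
  unfold Pop
  rw [← sum_flip (fun v => f (z + v))]
  simp [sub_eq_add_neg]

lemma qd_card (hd : 0 < d) : qd d * ((2 * d : ℕ) : ℝ≥0∞) = 1 := by
  unfold qd
  apply ENNReal.inv_mul_cancel
  · simp; omega
  · exact ENNReal.natCast_ne_top _

variable (p : ℕ → ℝ≥0∞)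

def hit (n : ℕ) (z : Zd d) : ℝ≥0∞ := ∑' S : SpT d, Wt p (qd d) n S * ind (tr S) z

def bh (r : ℕ → ℝ≥0∞) (n : ℕ) (z : Zd d) : ℝ≥0∞ := ∑' S : SpT d, RW p (qd d) r n S * ind (tr S) z

lemma hit_mono (n : ℕ) (z : Zd d) : hit p n z ≤ hit p (n + 1) z := by
  unfold hit
  apply ENNReal.tsum_le_tsum; intro S
  gcongr
  exact Wt_mono _ _ _ _

lemma hit_succ (n : ℕ) (z : Zd d) : hit p (n + 1) z = bh p p n z := by
  unfold hit bh; simp_rw [Wt_succ]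

def aw (n : ℕ) (x : Dir d × SpT d) : ℝ≥0∞ := qd d * Wt p (qd d) n x.2

lemma tsum_SpT (F : SpT d → ℝ≥0∞) : ∑' S, F S =
    ∑' k : ℕ, ∑' x : Fin k → Dir d × SpT d, F (node k (fun i => (x i).1) (fun i => (x i).2)) := by
  rw [← equivSig.symm.tsum_eq F, ENNReal.tsum_sigma']
  rfl

lemma aw_total (hd : 0 < d) (n : ℕ) : ∑' x : Dir d × SpT d, aw p n x = ∑' S : SpT d, Wt p (qd d) n S := by
  unfold aw
  rw [ENNReal.tsum_prod']
  simp_rw [ENNReal.tsum_mul_left]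
  rw [tsum_fintype]
  simp only [Finset.sum_const, Finset.card_univ, Fintype.card_prod, Fintype.card_fin,
    Fintype.card_bool, nsmul_eq_mul]
  rw [← mul_assoc, mul_comm d 2, qd_card hd, one_mul]

lemma RW_total (hd : 0 < d) (r : ℕ → ℝ≥0∞) (n : ℕ) :
    ∑' S : SpT d, RW p (qd d) r n S = ∑' k, r k * (∑' S : SpT d, Wt p (qd d) n S) ^ k := by
  rw [tsum_SpT]
  congr 1; funext k
  simp only [RW]
  rw [ENNReal.tsum_mul_left, ← aw_total p hd, ← tensor_total]
  rfl

lemma mass_le (hd : 0 < d) (hp : ∑' k, p k ≤ 1) (n : ℕ) : ∑' S : SpT d, Wt p (qd d) n S ≤ 1 := by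
  induction n with
  | zero => simp [Wt]
  | succ n ih =>
    simp_rw [Wt_succ]
    rw [RW_total p hd]
    calc _ ≤ ∑' k, p k := by
          apply ENNReal.tsum_le_tsum; intro k
          exact mul_le_of_le_one_right (zero_le) (pow_le_one₀ (zero_le) ih)
      _ ≤ 1 := hp

def Ez (z : Zd d) : Set (Dir d × SpT d) := {x | z - stepv x.1 ∈ tr x.2}

lemma aw_hit (n : ℕ) (z : Zd d) :
    ∑' x : Dir d × SpT d, aw p n x * ind (Ez z) x = Pop (hit p n) z := by
  rw [ENNReal.tsum_prod', tsum_fintype, Pop_sub, Finset.mul_sum]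
  apply Finset.sum_congr rfl
  intro e _
  unfold hit aw
  rw [← ENNReal.tsum_mul_left]
  congr 1; funext S
  simp only [mul_assoc]
  rfl

lemma bh_ne (r : ℕ → ℝ≥0∞) (n : ℕ) (z : Zd d) (hz : z ≠ 0) :
    bh p r n z = ∑' k, r k * Hk (aw p n) (Ez z) k := by
  unfold bh
  rw [tsum_SpT]
  congr 1; funext k
  unfold Hk
  rw [← ENNReal.tsum_mul_left]
  congr 1; funext x
  simp only [RW, aw, mul_assoc]
  congr 2
  apply ind_congr
  simp [tr, Ez, hz]

lemma bh_le_total (hd : 0 < d) (hp : ∑' k, p k ≤ 1) (r : ℕ → ℝ≥0∞) (n : ℕ) (z : Zd d) :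
    bh p r n z ≤ ∑' k, r k := by
  calc bh p r n z ≤ ∑' S : SpT d, RW p (qd d) r n S := by
        apply ENNReal.tsum_le_tsum; intro S
        exact mul_le_of_le_one_right (zero_le) (ind_le _ _)
    _ = _ := RW_total p hd r n
    _ ≤ _ := by
        apply ENNReal.tsum_le_tsum; intro k
        exact mul_le_of_le_one_right (zero_le) (pow_le_one₀ (zero_le) (mass_le p hd hp n))

lemma hit_le_one (hd : 0 < d) (hp : ∑' k, p k ≤ 1) (n : ℕ) (z : Zd d) : hit p n z ≤ 1 := by
  refine le_trans (ENNReal.tsum_le_tsum fun S => ?_) (mass_le p hd hp n)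
  exact mul_le_of_le_one_right (zero_le) (ind_le _ _)

lemma Pop_le_one (hd : 0 < d) {f : Zd d → ℝ≥0∞} (hf : ∀ z, f z ≤ 1) (z : Zd d) : Pop f z ≤ 1 := by
  calc Pop f z ≤ Pop (fun _ => 1) z := Pop_mono hf z
    _ = 1 := by
      unfold Pop
      simp only [Finset.sum_const, Finset.card_univ, Fintype.card_prod, Fintype.card_fin,
        Fintype.card_bool, nsmul_eq_mul, mul_one]
      rw [mul_comm d 2, qd_card hd]

def c0 : ℝ≥0∞ := ∑' k, if 2 ≤ k then p k else 0

lemma c0_le (hp : ∑' k, p k ≤ 1) : c0 p ≤ 1 := by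
  refine le_trans (ENNReal.tsum_le_tsum fun k => ?_) hp
  split_ifs <;> simp

/-- Main recursion. -/
lemma hit_rec (hd : 0 < d) (hp : ∑' k, p k ≤ 1) (hm : ∑' k : ℕ, (k : ℝ≥0∞) * p k ≤ 1)
    (n : ℕ) (z : Zd d) :
    hit p (n + 1) z + c0 p * (Pop (hit p n) z) ^ 2 ≤ Pop (hit p n) z + 2 * dl z := by
  by_cases hz : z = 0
  · have : dl z = 1 := by simp [dl, ind, hz]
    rw [this]
    have h1 := hit_le_one p hd hp (n + 1) z
    have h2 := Pop_le_one hd (hit_le_one p hd hp n) z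
    calc hit p (n + 1) z + c0 p * (Pop (hit p n) z) ^ 2 ≤ 1 + 1 * 1 ^ 2 := by
          gcongr; exact c0_le p hp
      _ = 2 * 1 := by norm_num
      _ ≤ _ := le_add_self
  · rw [hit_succ, bh_ne p p n z hz]
    refine le_trans ?_ le_self_add
    unfold c0
    rw [← ENNReal.tsum_mul_right, ← ENNReal.tsum_add]
    calc _ ≤ ∑' k : ℕ, ((k : ℝ≥0∞) * p k) * Pop (hit p n) z := by
          apply ENNReal.tsum_le_tsum; intro k
          have := Hk_bound (aw p n) (Ez z) ((aw_total p hd n).le.trans (mass_le p hd hp n)) k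
          rw [aw_hit] at this
          calc _ = p k * (Hk (aw p n) (Ez z) k +
                if 2 ≤ k then (Pop (hit p n) z) ^ 2 else 0) := by
                split_ifs <;> ring
            _ ≤ p k * (k * Pop (hit p n) z) := by gcongr
            _ = _ := by ring
      _ ≤ _ := by
          rw [ENNReal.tsum_mul_right]
          exact mul_le_of_le_one_left (zero_le) hm

lemma bh_le (hd : 0 < d) (hp : ∑' k, p k ≤ 1) (r : ℕ → ℝ≥0∞) (hr : ∑' k, r k ≤ 1)
    (n : ℕ) (z : Zd d) :
    bh p r n z ≤ dl z + (∑' k : ℕ, (k : ℝ≥0∞) * r k) * Pop (hit p n) z := by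
  by_cases hz : z = 0
  · have : dl z = 1 := by simp [dl, ind, hz]
    rw [this]
    exact (bh_le_total p hd hp r n z).trans (hr.trans le_self_add)
  · rw [bh_ne p r n z hz]
    refine le_trans ?_ le_add_self
    rw [← ENNReal.tsum_mul_right]
    apply ENNReal.tsum_le_tsum; intro k
    have := Hk_bound (aw p n) (Ez z) ((aw_total p hd n).le.trans (mass_le p hd hp n)) k
    rw [aw_hit] at this
    calc _ ≤ r k * (k * Pop (hit p n) z) := by gcongr; exact le_self_add.trans this
      _ = _ := by ring

end recursion

/-! ### Part C : bounds on the expected intersection sums -/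

section bounds

variable {d : ℕ} (p : ℕ → ℝ≥0∞)

lemma tsum_shift (F : Zd d → ℝ≥0∞) (v : Zd d) : ∑' z, F (z + v) = ∑' z, F z :=
  (Equiv.addRight v).tsum_eq F

lemma tsum_shift_sub (F : Zd d → ℝ≥0∞) (v : Zd d) : ∑' z, F (z - v) = ∑' z, F z :=
  (Equiv.subRight v).tsum_eq F

lemma tsum_Pop (hd : 0 < d) (f : Zd d → ℝ≥0∞) : ∑' z, Pop f z = ∑' z, f z := by
  unfold Pop
  rw [ENNReal.tsum_mul_left, Summable.tsum_finsetSum (fun _ _ => ENNReal.summable)]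
  simp_rw [tsum_shift]
  simp only [Finset.sum_const, Finset.card_univ, Fintype.card_prod, Fintype.card_fin,
    Fintype.card_bool, nsmul_eq_mul]
  rw [← mul_assoc, mul_comm d 2, qd_card hd, one_mul]

lemma tsum_dl : ∑' z : Zd d, dl z = 1 := by
  rw [tsum_eq_single 0]
  · exact ind_of_mem rfl
  · intro z hz; exact ind_of_notMem hz

lemma tsum_dl_mul (F : Zd d → ℝ≥0∞) : ∑' z : Zd d, dl z * F z = F 0 := by
  rw [tsum_eq_single 0]
  · have : dl (0 : Zd d) = 1 := ind_of_mem rfl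
    rw [this, one_mul]
  · intro z hz
    have : dl z = 0 := ind_of_notMem hz
    rw [this, zero_mul]

lemma dl_sq (z : Zd d) : dl z ^ 2 = dl z := by
  unfold dl ind; split_ifs <;> simp

lemma hit_l2 (hd : 0 < d) (hp : ∑' k, p k ≤ 1) (hm : ∑' k : ℕ, (k : ℝ≥0∞) * p k ≤ 1) (n : ℕ) :
    c0 p * ∑' z : Zd d, (Pop (hit p n) z) ^ 2 ≤ 2 := by
  have step : ∀ n, (∑' z : Zd d, hit p (n + 1) z) + c0 p * ∑' z : Zd d, (Pop (hit p n) z) ^ 2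
      ≤ (∑' z : Zd d, hit p n z) + 2 := by
    intro n
    rw [← ENNReal.tsum_mul_left, ← ENNReal.tsum_add]
    refine (ENNReal.tsum_le_tsum (hit_rec p hd hp hm n)).trans ?_
    rw [ENNReal.tsum_add, tsum_Pop hd, ENNReal.tsum_mul_left, tsum_dl, mul_one]
  have fin : ∀ n, (∑' z : Zd d, hit p n z) ≠ ⊤ := by
    intro n
    induction n with
    | zero => simp [hit, Wt]
    | succ n ih =>
      refine ne_top_of_le_ne_top (ENNReal.add_ne_top.2 ⟨ih, ENNReal.ofNat_ne_top⟩)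
        (le_self_add.trans (step n))
  have := step n
  have mono : (∑' z : Zd d, hit p n z) ≤ ∑' z : Zd d, hit p (n + 1) z :=
    ENNReal.tsum_le_tsum fun z => hit_mono p n z
  have h2 := (add_le_add_left mono _).trans this
  exact (ENNReal.add_le_add_iff_left (fin n)).1 h2

lemma mul_le_sq_add (a b : ℝ≥0∞) : a * b ≤ a ^ 2 + b ^ 2 := by
  rcases le_total a b with h | h
  · calc a * b ≤ b * b := by gcongr
      _ = b ^ 2 := by ring
      _ ≤ _ := le_add_self
  · calc a * b ≤ a * a := by gcongr
      _ = a ^ 2 := by ring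
      _ ≤ _ := le_self_add

lemma add_sq_le4 (a b : ℝ≥0∞) : (a + b) ^ 2 ≤ 4 * (a ^ 2 + b ^ 2) := by
  rcases le_total a b with h | h
  · calc (a + b) ^ 2 ≤ (b + b) ^ 2 := by gcongr
      _ = 4 * b ^ 2 := by ring
      _ ≤ _ := by gcongr; exact le_add_self
  · calc (a + b) ^ 2 ≤ (a + a) ^ 2 := by gcongr
      _ = 4 * a ^ 2 := by ring
      _ ≤ _ := by gcongr; exact le_self_add

lemma inter_low (hd : 0 < d) (hp : ∑' k, p k ≤ 1) (hm : ∑' k : ℕ, (k : ℝ≥0∞) * p k ≤ 1)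
    (hc : c0 p ≠ 0) (r : ℕ → ℝ≥0∞) (hr : ∑' k, r k ≤ 1)
    (hσ : ∑' k : ℕ, (k : ℝ≥0∞) * r k ≠ ⊤) :
    ∃ K : ℝ≥0∞, K ≠ ⊤ ∧ ∀ (n : ℕ) (x y : Zd d),
      ∑' z, bh p r n (z - x) * bh p r n (z - y) ≤ K := by
  set σ := ∑' k : ℕ, (k : ℝ≥0∞) * r k with hσd
  refine ⟨2 * (4 * (1 + σ ^ 2 * ((c0 p)⁻¹ * 2))), ?_, ?_⟩
  · have : (c0 p)⁻¹ ≠ ⊤ := ENNReal.inv_ne_top.2 hc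
    finiteness
  intro n x y
  have hl2 : ∑' z : Zd d, (Pop (hit p n) z) ^ 2 ≤ (c0 p)⁻¹ * 2 := by
    have h := hit_l2 (d := d) p hd hp hm n
    have hct : c0 p ≠ ⊤ := ne_top_of_le_ne_top ENNReal.one_ne_top (c0_le p hp)
    calc _ = (c0 p)⁻¹ * (c0 p * ∑' z : Zd d, (Pop (hit p n) z) ^ 2) := by
          rw [← mul_assoc, ENNReal.inv_mul_cancel hc hct, one_mul]
      _ ≤ _ := by gcongr
  have sq : ∑' z : Zd d, (bh p r n z) ^ 2 ≤ 4 * (1 + σ ^ 2 * ((c0 p)⁻¹ * 2)) := by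
    calc _ ≤ ∑' z : Zd d, 4 * (dl z + σ ^ 2 * (Pop (hit p n) z) ^ 2) := by
          apply ENNReal.tsum_le_tsum; intro z
          calc _ ≤ (dl z + σ * Pop (hit p n) z) ^ 2 := by
                gcongr; exact bh_le p hd hp r hr n z
            _ ≤ _ := add_sq_le4 _ _
            _ = _ := by rw [dl_sq, mul_pow]
      _ ≤ _ := by
          rw [ENNReal.tsum_mul_left, ENNReal.tsum_add, tsum_dl, ENNReal.tsum_mul_left]
          gcongr
  calc _ ≤ ∑' z, ((bh p r n (z - x)) ^ 2 + (bh p r n (z - y)) ^ 2) :=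
        ENNReal.tsum_le_tsum fun z => mul_le_sq_add _ _
    _ = 2 * ∑' z : Zd d, (bh p r n z) ^ 2 := by
        rw [ENNReal.tsum_add, tsum_shift_sub (fun z => (bh p r n z) ^ 2),
          tsum_shift_sub (fun z => (bh p r n z) ^ 2), two_mul]
    _ ≤ _ := by gcongr

lemma Pop_mul (c : ℝ≥0∞) (f : Zd d → ℝ≥0∞) (z : Zd d) : Pop (fun w => c * f w) z = c * Pop f z := by
  unfold Pop
  rw [← Finset.mul_sum]; ring

lemma inter_high_aux (hd : 0 < d) (hp : ∑' k, p k ≤ 1) (hm : ∑' k : ℕ, (k : ℝ≥0∞) * p k ≤ 1)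
    (r : ℕ → ℝ≥0∞) (hr : ∑' k, r k ≤ 1)
    (hσ : ∑' k : ℕ, (k : ℝ≥0∞) * r k ≠ ⊤)
    (f ψ : Zd d → ℝ≥0∞) (c : ℝ≥0∞) (hc : c ≠ 0) (hct : c ≠ ⊤)
    (hf : ∀ z, Pop f z + c * dl z ≤ f z) (hψ : ∀ z, Pop ψ z + c * f z ≤ ψ z) :
    ∃ K : ℝ≥0∞, K ≠ ⊤ ∧ ∀ (n : ℕ) (x y : Zd d),
      ∑' z, bh p r n (z - x) * bh p r n (z - y) ≤ K * ψ (y - x) := by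
  set σ := ∑' k : ℕ, (k : ℝ≥0∞) * r k with hσd
  have hci : c⁻¹ ≠ ⊤ := ENNReal.inv_ne_top.2 hc
  have hcc : c⁻¹ * c = 1 := ENNReal.inv_mul_cancel hc hct
  have dlf : ∀ z, dl z ≤ c⁻¹ * f z := by
    intro z
    calc dl z = c⁻¹ * (c * dl z) := by rw [← mul_assoc, hcc, one_mul]
      _ ≤ _ := by gcongr; exact le_add_self.trans (hf z)
  have fψ : ∀ z, f z ≤ c⁻¹ * ψ z := by
    intro z
    calc f z = c⁻¹ * (c * f z) := by rw [← mul_assoc, hcc, one_mul]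
      _ ≤ _ := by gcongr; exact le_add_self.trans (hψ z)
  have hrec : ∀ n (z : Zd d), hit p (n + 1) z ≤ Pop (hit p n) z + 2 * dl z := fun n z =>
    le_self_add.trans (hit_rec p hd hp hm n z)
  have hitf : ∀ n z, hit p n z ≤ 2 * c⁻¹ * f z := by
    intro n
    induction n with
    | zero => intro z; simp [hit, Wt]
    | succ n ih =>
      intro z
      calc _ ≤ Pop (hit p n) z + 2 * dl z := hrec n z
        _ ≤ 2 * c⁻¹ * Pop f z + 2 * dl z := by
            gcongr; exact (Pop_mono ih z).trans (Pop_mul _ _ _).le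
        _ = 2 * c⁻¹ * (Pop f z + c * dl z) := by
            rw [mul_add, ← mul_assoc (2 * c⁻¹) c, mul_assoc 2 c⁻¹ c, hcc, mul_one]
        _ ≤ _ := by gcongr; exact hf z
  have popf : ∀ z, Pop f z ≤ f z := fun z => le_self_add.trans (hf z)
  have popψ : ∀ z, Pop ψ z ≤ ψ z := fun z => le_self_add.trans (hψ z)
  have bhf : ∀ n z, bh p r n z ≤ (c⁻¹ + σ * (2 * c⁻¹)) * f z := by
    intro n z
    calc _ ≤ dl z + σ * Pop (hit p n) z := bh_le p hd hp r hr n z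
      _ ≤ c⁻¹ * f z + σ * (2 * c⁻¹ * f z) := by
          gcongr
          · exact dlf z
          · exact (Pop_mono (hitf n) z).trans ((Pop_mul _ _ _).le.trans (by gcongr; exact popf z))
      _ = _ := by ring
  have conv : ∀ (g : Zd d → ℝ≥0∞) w, ∑' z, Pop g z * f (z + w)
      = Pop (fun w => ∑' z, g z * f (z + w)) w := by
    intro g w
    conv_lhs => enter [1, z]; rw [Pop_sub, mul_assoc, Finset.sum_mul]
    rw [ENNReal.tsum_mul_left, Summable.tsum_finsetSum (fun _ _ => ENNReal.summable), Pop]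
    congr 1
    apply Finset.sum_congr rfl
    intro e _
    rw [← tsum_shift_sub (fun z => g z * f (z + (w + stepv e))) (stepv e)]
    congr 1; funext z
    congr 2
    abel
  have Kb : ∀ n w, ∑' z, hit p n z * f (z + w) ≤ 2 * c⁻¹ * ψ w := by
    intro n
    induction n with
    | zero => intro z; simp [hit, Wt]
    | succ n ih =>
      intro w
      calc _ ≤ ∑' z, (Pop (hit p n) z + 2 * dl z) * f (z + w) := by
            apply ENNReal.tsum_le_tsum; intro z; gcongr; exact hrec n z
        _ = Pop (fun w => ∑' z, hit p n z * f (z + w)) w + 2 * f w := by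
            simp_rw [add_mul]
            rw [ENNReal.tsum_add, conv]
            simp_rw [mul_assoc]
            rw [ENNReal.tsum_mul_left, tsum_dl_mul (fun z => f (z + w)), zero_add]
        _ ≤ 2 * c⁻¹ * Pop ψ w + 2 * f w := by
            gcongr; exact (Pop_mono ih w).trans (Pop_mul _ _ _).le
        _ = 2 * c⁻¹ * (Pop ψ w + c * f w) := by
            rw [mul_add, ← mul_assoc (2 * c⁻¹) c, mul_assoc 2 c⁻¹ c, hcc, mul_one]
        _ ≤ _ := by gcongr; exact hψ w
  refine ⟨(c⁻¹ + σ * (2 * c⁻¹)) * (c⁻¹ + σ * (2 * c⁻¹)), by finiteness, ?_⟩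
  intro n x y
  calc ∑' z, bh p r n (z - x) * bh p r n (z - y)
      = ∑' z, bh p r n (z + (y - x)) * bh p r n z := by
        rw [← tsum_shift_sub (fun z => bh p r n (z + (y - x)) * bh p r n z) y]
        congr 1; funext z
        congr 2
        abel
    _ ≤ ∑' z, ((c⁻¹ + σ * (2 * c⁻¹)) * f (z + (y - x))) * (dl z + σ * Pop (hit p n) z) := by
        apply ENNReal.tsum_le_tsum; intro z
        gcongr
        · exact bhf n _
        · exact bh_le p hd hp r hr n z
    _ = (c⁻¹ + σ * (2 * c⁻¹)) * (∑' z, (dl z * f (z + (y - x))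
          + σ * (Pop (hit p n) z * f (z + (y - x))))) := by
        rw [← ENNReal.tsum_mul_left]
        congr 1; funext z
        ring
    _ = (c⁻¹ + σ * (2 * c⁻¹)) * (f (y - x) +
          σ * Pop (fun w => ∑' z, hit p n z * f (z + w)) (y - x)) := by
        rw [ENNReal.tsum_add, tsum_dl_mul (fun z => f (z + (y - x))), ENNReal.tsum_mul_left, conv,
          zero_add]
    _ ≤ (c⁻¹ + σ * (2 * c⁻¹)) * (c⁻¹ * ψ (y - x) + σ * (2 * c⁻¹ * ψ (y - x))) := by
        gcongr
        · exact fψ _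
        · exact (Pop_mono (Kb n) _).trans ((Pop_mul _ _ _).le.trans (by gcongr; exact popψ _))
    _ = _ := by ring

lemma ofReal_Pop (hd : 0 < d) (g : Zd d → ℝ) (hg : ∀ z, 0 ≤ g z) (z : Zd d) :
    Pop (fun z => ENNReal.ofReal (g z)) z =
      ENNReal.ofReal (((2 * d : ℕ) : ℝ)⁻¹ * ∑ e : Dir d, g (z + stepv e)) := by
  unfold Pop qd
  rw [ENNReal.ofReal_mul (by positivity), ENNReal.ofReal_sum_of_nonneg (fun _ _ => hg _),
    ENNReal.ofReal_inv_of_pos (by positivity), ENNReal.ofReal_natCast]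

lemma inter_high (hd : 5 ≤ d) (hp : ∑' k, p k ≤ 1) (hm : ∑' k : ℕ, (k : ℝ≥0∞) * p k ≤ 1)
    (r : ℕ → ℝ≥0∞) (hr : ∑' k, r k ≤ 1)
    (hσ : ∑' k : ℕ, (k : ℝ≥0∞) * r k ≠ ⊤) :
    ∃ K : ℝ≥0∞, K ≠ ⊤ ∧ ∀ (n : ℕ) (x y : Zd d), x ≠ y →
      ∑' z, bh p r n (z - x) * bh p r n (z - y) ≤
        K * ENNReal.ofReal (Real.rpow (euclDist x y) (-((d : ℝ) - 4))) := by
  obtain ⟨A, c, hA, hc, h1, h2⟩ := super_real d hd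
  have hd0 : 0 < d := by omega
  have hpos : ∀ (s : ℝ) (z : Zd d), 0 ≤ (sqn z + A) ^ s := fun s z =>
    Real.rpow_nonneg (by have := sqn_nonneg z; linarith) _
  have hsumn : ∀ (s : ℝ) (z : Zd d),
      0 ≤ ((2 * d : ℕ) : ℝ)⁻¹ * ∑ e : Dir d, (sqn (z + stepv e) + A) ^ s := fun s z =>
    mul_nonneg (by positivity) (Finset.sum_nonneg fun _ _ => hpos _ _)
  obtain ⟨K, hK, h⟩ := inter_high_aux p hd0 hp hm r hr hσ
    (fun z => ENNReal.ofReal ((sqn z + A) ^ (-(((d:ℝ) - 2) / 2))))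
    (fun z => ENNReal.ofReal ((sqn z + A) ^ (-(((d:ℝ) - 4) / 2))))
    (ENNReal.ofReal c) (by simpa using hc) ENNReal.ofReal_ne_top
    (by
      intro z
      rw [ofReal_Pop hd0 _ (hpos _)]
      have e : dl z = ENNReal.ofReal (if z = 0 then 1 else 0) := by
        unfold dl
        split_ifs with hz
        · rw [ind_of_mem (show z ∈ ({0} : Set (Zd d)) from hz), ENNReal.ofReal_one]
        · rw [ind_of_notMem (show z ∉ ({0} : Set (Zd d)) from hz), ENNReal.ofReal_zero]
      rw [e, ← ENNReal.ofReal_mul hc.le, ← ENNReal.ofReal_add (hsumn _ _)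
        (mul_nonneg hc.le (by split_ifs <;> norm_num))]
      exact ENNReal.ofReal_le_ofReal (h1 z))
    (by
      intro z
      rw [ofReal_Pop hd0 _ (hpos _)]
      rw [← ENNReal.ofReal_mul hc.le, ← ENNReal.ofReal_add (hsumn _ _)
        (mul_nonneg hc.le (hpos _ _))]
      exact ENNReal.ofReal_le_ofReal (h2 z))
  refine ⟨K, hK, fun n x y hxy => (h n x y).trans ?_⟩
  gcongr
  have hsq : 0 < sqn (y - x) := by
    refine lt_of_le_of_ne (sqn_nonneg _) (fun h0 => hxy ?_)
    have := (Finset.sum_eq_zero_iff_of_nonneg (fun i _ => sq_nonneg _)).1 h0.symm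
    funext i
    have := this i (Finset.mem_univ i)
    have : (((y - x) i : ℤ) : ℝ) = 0 := by simpa using this
    have : (y - x) i = 0 := by exact_mod_cast this
    simp only [Pi.sub_apply] at this
    omega
  have he : euclDist x y = (sqn (y - x)) ^ (1/2 : ℝ) := by
    unfold euclDist sqn
    rw [Real.sqrt_eq_rpow]
    congr 1
    apply Finset.sum_congr rfl
    intro i _
    simp only [Pi.sub_apply]; push_cast; ring
  have hd5 : (5:ℝ) ≤ d := by exact_mod_cast hd
  show _ ≤ (euclDist x y) ^ (-((d:ℝ) - 4))
  rw [he, ← Real.rpow_mul hsq.le]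
  have : (1/2 : ℝ) * (-((d:ℝ) - 4)) = -(((d:ℝ) - 4) / 2) := by ring
  rw [this]
  exact Real.rpow_le_rpow_of_nonpos hsq (by linarith) (by linarith)

end bounds

/-! ### Part D : correspondence with plane trees coded by words -/

namespace SpT

variable {d : ℕ}

def words : SpT d → Set (List ℕ)
  | node k _ c => insert [] (⋃ i : Fin k, (List.cons (i : ℕ)) '' words (c i))

def pos : SpT d → List ℕ → Zd d
  | node k e c => fun w => match w with
    | [] => 0
    | j :: v => if h : j < k then stepv (e ⟨j, h⟩) + pos (c ⟨j, h⟩) v else 0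

lemma nil_mem (S : SpT d) : [] ∈ words S := by
  cases S; simp [words]

lemma cons_mem (k : ℕ) (e : Fin k → Dir d) (c : Fin k → SpT d) (j : ℕ) (v : List ℕ) :
    j :: v ∈ words (node k e c) ↔ ∃ h : j < k, v ∈ words (c ⟨j, h⟩) := by
  simp only [words, mem_insert_iff, reduceCtorEq, mem_iUnion, mem_image, List.cons.injEq, false_or]
  constructor
  · rintro ⟨i, w, hw, h1, h2⟩
    subst h1; subst h2
    exact ⟨i.2, hw⟩
  · rintro ⟨h, hv⟩
    exact ⟨⟨j, h⟩, v, hv, rfl, rfl⟩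

lemma words_finite (S : SpT d) : (words S).Finite := by
  induction S with
  | node k e c ih =>
    rw [words]
    exact (Set.finite_iUnion fun i => (ih i).image _).insert _

lemma tr_eq (S : SpT d) : pos S '' words S = tr S := by
  induction S with
  | node k e c ih =>
    ext z
    rw [tr, Set.mem_setOf_eq]
    constructor
    · rintro ⟨w, hw, rfl⟩
      cases w with
      | nil => left; simp [pos]
      | cons j v =>
        right
        obtain ⟨h, hv⟩ := (cons_mem _ _ _ _ _).1 hw
        refine ⟨⟨j, h⟩, ?_⟩
        rw [← ih]
        exact ⟨v, hv, by simp [pos, h]⟩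
    · rintro (h | ⟨i, hi⟩)
      · exact ⟨[], nil_mem _, by simp [pos, h]⟩
      · rw [← ih] at hi
        obtain ⟨v, hv, hz⟩ := hi
        refine ⟨(i : ℕ) :: v, (cons_mem _ _ _ _ _).2 ⟨i.2, hv⟩, ?_⟩
        simp [pos, hz]

lemma tr_finite (S : SpT d) : (tr S).Finite := by
  rw [← tr_eq]; exact (words_finite S).image _

def fullW (p : ℕ → ℝ≥0∞) (q : ℝ≥0∞) : SpT d → ℝ≥0∞
  | node k _ c => p k * ∏ i, (q * fullW p q (c i))

def fullB (p : ℕ → ℝ≥0∞) (q : ℝ≥0∞) (r : ℕ → ℝ≥0∞) : SpT d → ℝ≥0∞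
  | node k _ c => r k * ∏ i, (q * fullW p q (c i))

lemma Wt_eventually (p : ℕ → ℝ≥0∞) (q : ℝ≥0∞) (S : SpT d) :
    ∃ N, ∀ n, N ≤ n → Wt p q n S = fullW p q S := by
  induction S with
  | node k e c ih =>
    choose N hN using ih
    refine ⟨Finset.univ.sup N + 1, fun n hn => ?_⟩
    obtain ⟨m, rfl⟩ : ∃ m, n = m + 1 := ⟨n - 1, by omega⟩
    rw [Wt, fullW]
    congr 1
    apply Finset.prod_congr rfl
    intro i _
    rw [hN i m ((Finset.le_sup (Finset.mem_univ i)).trans (by omega))]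

lemma RW_eventually (p : ℕ → ℝ≥0∞) (q : ℝ≥0∞) (r : ℕ → ℝ≥0∞) (S : SpT d) :
    ∃ N, ∀ n, N ≤ n → RW p q r n S = fullB p q r S := by
  cases S with
  | node k e c =>
    choose N hN using fun i => Wt_eventually p q (c i)
    refine ⟨Finset.univ.sup N, fun n hn => ?_⟩
    rw [RW, fullB]
    congr 1
    apply Finset.prod_congr rfl
    intro i _
    rw [hN i n ((Finset.le_sup (Finset.mem_univ i)).trans hn)]

lemma childCount_nil (k : ℕ) (e : Fin k → Dir d) (c : Fin k → SpT d) :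
    childCount (words (node k e c)) [] = k := by
  unfold childCount
  have : {j : ℕ | [] ++ [j] ∈ words (node k e c)} = ↑(Finset.range k) := by
    ext j
    simp only [List.nil_append, Set.mem_setOf_eq, cons_mem, Finset.coe_range, Set.mem_Iio]
    exact ⟨fun h => h.1, fun h => ⟨h, nil_mem _⟩⟩
  rw [this, Set.ncard_coe_finset, Finset.card_range]

lemma childCount_cons (k : ℕ) (e : Fin k → Dir d) (c : Fin k → SpT d) (i : Fin k) (w : List ℕ) :
    childCount (words (node k e c)) ((i : ℕ) :: w) = childCount (words (c i)) w := by
  unfold childCount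
  congr 1
  ext j
  simp only [List.cons_append, Set.mem_setOf_eq, cons_mem]
  exact ⟨fun h => h.2, fun h => ⟨i.2, h⟩⟩

lemma disj (k : ℕ) (c : Fin k → SpT d) :
    Pairwise (Function.onFun Disjoint fun i : Fin k => (List.cons (i : ℕ)) '' words (c i)) := by
  intro i j hij
  rw [Function.onFun, Set.disjoint_left]
  rintro w ⟨v, _, rfl⟩ ⟨v', _, h⟩
  simp only [List.cons.injEq] at h
  exact hij (Fin.ext h.1.symm)

lemma nil_notMem (k : ℕ) (c : Fin k → SpT d) :
    [] ∉ ⋃ i : Fin k, (List.cons (i : ℕ)) '' words (c i) := by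
  simp

lemma finprod_sub (p : ℕ → ℝ≥0∞) (k : ℕ) (e : Fin k → Dir d) (c : Fin k → SpT d) :
    ∏ᶠ w ∈ ⋃ i : Fin k, (List.cons (i : ℕ)) '' words (c i), p (childCount (words (node k e c)) w)
      = ∏ i, ∏ᶠ w ∈ words (c i), p (childCount (words (c i)) w) := by
  rw [finprod_mem_iUnion (disj k c) (fun i => (words_finite _).image _), finprod_eq_prod_of_fintype]
  apply Finset.prod_congr rfl
  intro i _
  rw [finprod_mem_image (fun a _ b _ h => by simpa using h)]
  simp_rw [childCount_cons]

lemma ncard_words (k : ℕ) (e : Fin k → Dir d) (c : Fin k → SpT d) :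
    (words (node k e c)).ncard - 1 = ∑ i, ((words (c i)).ncard - 1 + 1) := by
  rw [words, Set.ncard_insert_of_notMem (nil_notMem k c)
    (Set.finite_iUnion fun i => (words_finite _).image _),
    Set.ncard_iUnion_of_finite (fun i => (words_finite _).image _) (disj k c),
    finsum_eq_sum_of_fintype, Nat.add_sub_cancel]
  apply Finset.sum_congr rfl
  intro i _
  rw [Set.ncard_image_of_injective _ (fun a b h => by simpa using h)]
  have : 0 < (words (c i)).ncard := (Set.ncard_pos (words_finite _)).2 ⟨_, nil_mem _⟩
  omega

lemma fullW_eq (p : ℕ → ℝ≥0∞) (q : ℝ≥0∞) (S : SpT d) :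
    fullW p q S = (∏ᶠ w ∈ words S, p (childCount (words S) w)) * q ^ ((words S).ncard - 1) := by
  induction S with
  | node k e c ih =>
    rw [fullW, ncard_words]
    have : ∏ᶠ w ∈ words (node k e c), p (childCount (words (node k e c)) w) =
        p k * ∏ᶠ w ∈ ⋃ i : Fin k, (List.cons (i : ℕ)) '' words (c i),
          p (childCount (words (node k e c)) w) := by
      conv_lhs => enter [1, w]; rw [show (w ∈ words (node k e c)) = (w ∈ insert []
        (⋃ i : Fin k, (List.cons (i : ℕ)) '' words (c i))) by rw [words]]
      rw [finprod_mem_insert _ (nil_notMem k c)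
        (Set.finite_iUnion fun i => (words_finite _).image _), childCount_nil]
    rw [this, finprod_sub, mul_assoc, ← Finset.prod_pow_eq_pow_sum, ← Finset.prod_mul_distrib]
    congr 1
    apply Finset.prod_congr rfl
    intro i _
    rw [ih i, pow_succ]
    ring

lemma fullB_eq (p : PMF ℕ) (q : ℝ≥0∞) (S : SpT d) :
    fullB p q (fun k => ((k + 1 : ℕ) : ℝ≥0∞) * p (k + 1)) S =
      bushWeight p (words S) * q ^ ((words S).ncard - 1) := by
  cases S with
  | node k e c =>
    rw [fullB, ncard_words, bushWeight, childCount_nil]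
    have : words (node k e c) \ {[]} = ⋃ i : Fin k, (List.cons (i : ℕ)) '' words (c i) := by
      conv_lhs => rw [words]
      rw [Set.insert_diff_of_mem _ (Set.mem_singleton _),
        Set.diff_singleton_eq_self (nil_notMem k c)]
    rw [this, finprod_sub, mul_assoc, mul_assoc, mul_assoc, ← Finset.prod_pow_eq_pow_sum,
      ← Finset.prod_mul_distrib]
    congr 2
    apply Finset.prod_congr rfl
    intro i _
    rw [fullW_eq, pow_succ]
    ring

lemma unit_step (v : Zd d) (h : IsUnitStep v) : ∃ e : Dir d, v = stepv e := by
  obtain ⟨i, h0, h1⟩ := h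
  rcases h1 with h1 | h1
  · refine ⟨(i, true), ?_⟩
    funext j
    by_cases hj : j = i
    · subst hj; simp [stepv, h1]
    · simp [stepv, h0 j hj, hj]
  · refine ⟨(i, false), ?_⟩
    funext j
    by_cases hj : j = i
    · subst hj; simp [stepv, h1]
    · simp [stepv, h0 j hj, hj]

lemma single_mem (t : Set (List ℕ)) (ht : IsPlaneTree t) (j : ℕ) (v : List ℕ) :
    j :: v ∈ t → [j] ∈ t := by
  induction v using List.reverseRecOn with
  | nil => exact id
  | append_singleton v a ih =>
    intro h
    exact ih (ht.2.1 (j :: v) a h)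

lemma surj (n : ℕ) : ∀ (t : Set (List ℕ)), IsPlaneTree t → t.Finite → t.ncard ≤ n →
    ∀ g : List ℕ → Zd d, IsBRWEmbedding t g →
    ∃ S : SpT d, words S = t ∧ ∀ v ∈ t, g v = g [] + pos S v := by
  induction n with
  | zero =>
    intro t ht hf hn
    have : 0 < t.ncard := (Set.ncard_pos hf).2 ⟨_, ht.1⟩
    omega
  | succ n ih =>
    intro t ht hf hn g hg
    obtain ⟨k, hk⟩ : ∃ k, ∀ j, [j] ∈ t ↔ j < k := by
      have hfin : {j : ℕ | [j] ∈ t}.Finite :=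
        Set.Finite.preimage (f := fun j : ℕ => [j]) (fun a _ b _ h => by simpa using h) hf
      have hex : ∃ j, [j] ∉ t := by
        obtain ⟨j, hj⟩ := hfin.exists_notMem
        exact ⟨j, hj⟩
      classical
      refine ⟨Nat.find hex, fun j => ⟨fun h => ?_, fun h => ?_⟩⟩
      · by_contra hlt
        push Not at hlt
        exact Nat.find_spec hex (ht.2.2 [] _ j hlt h)
      · by_contra hn
        exact Nat.find_min hex h hn
    have sub : ∀ i : Fin k, ∃ S : SpT d, words S = {v | (i : ℕ) :: v ∈ t} ∧
        ∀ v, (i : ℕ) :: v ∈ t → g (i :: v) = g [(i : ℕ)] + pos S v := by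
      intro i
      have hinj : Function.Injective (List.cons (i : ℕ)) := fun a b h => by simpa using h
      refine ih {v | (i : ℕ) :: v ∈ t} ⟨(hk i).2 i.2, ?_, ?_⟩
        (Set.Finite.preimage hinj.injOn hf) ?_ (fun v => g (i :: v)) ?_
      · intro w a h; exact ht.2.1 (i :: w) a h
      · intro w a b hab h; exact ht.2.2 (i :: w) a b hab h
      · have h1 : (List.cons (i : ℕ) '' {v | (i : ℕ) :: v ∈ t}).ncard
            = {v | (i : ℕ) :: v ∈ t}.ncard := Set.ncard_image_of_injective _ hinj
        have h2 : List.cons (i : ℕ) '' {v | (i : ℕ) :: v ∈ t} ⊆ t \ {[]} := by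
          rintro w ⟨v, hv, rfl⟩
          exact ⟨hv, by simp⟩
        have h3 := Set.ncard_le_ncard h2 (hf.subset Set.diff_subset)
        have h4 := Set.ncard_diff_singleton_lt_of_mem ht.1 hf
        omega
      · intro w hw hne
        have := hg (i :: w) hw (by simp)
        rwa [List.dropLast_cons_of_ne_nil hne] at this
    choose c hc1 hc2 using sub
    have hs : ∀ i : Fin k, ∃ e : Dir d, g [(i : ℕ)] - g [] = stepv e := fun i =>
      unit_step _ (by simpa using hg [(i : ℕ)] ((hk i).2 i.2) (by simp))
    choose e he using hs
    refine ⟨node k e c, ?_, ?_⟩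
    · ext w
      cases w with
      | nil => simp [nil_mem, ht.1]
      | cons j v =>
        rw [cons_mem]
        constructor
        · rintro ⟨h, hv⟩
          rw [hc1] at hv
          exact hv
        · intro h
          have hj := (hk j).1 (single_mem t ht j v h)
          exact ⟨hj, by rw [hc1]; exact h⟩
    · intro w hw
      cases w with
      | nil => simp [pos]
      | cons j v =>
        have hj := (hk j).1 (single_mem t ht j v hw)
        have h1 := hc2 ⟨j, hj⟩ v hw
        have h2 := he ⟨j, hj⟩
        simp only at h1 h2
        simp only [pos, hj, dif_pos]
        rw [h1, ← h2]
        abel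

end SpT

/-! ### Part E : conclusion -/

section final

variable {d : ℕ}

lemma ncard_le_tsum {α : Type*} (s : Set α) : (s.ncard : ℝ≥0∞) ≤ ∑' z, ind s z := by
  classical
  by_cases hs : s.Finite
  · rw [Set.ncard_eq_toFinset_card s hs]
    calc ((hs.toFinset.card : ℕ) : ℝ≥0∞) = ∑ z ∈ hs.toFinset, ind s z := by
          rw [Finset.sum_congr rfl (g := fun _ => (1 : ℝ≥0∞))]
          · simp
          · intro z hz
            exact ind_of_mem (hs.mem_toFinset.1 hz)
      _ ≤ _ := ENNReal.sum_le_tsum _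
  · rw [Set.Infinite.ncard hs]; simp

/-- Intersection cardinality of two translated traces. -/
def Nint (x y : Zd d) (S : SpT d × SpT d) : ℝ≥0∞ :=
  ((({z | z - x ∈ tr S.1} ∩ {z | z - y ∈ tr S.2} : Set (Zd d)).ncard : ℕ) : ℝ≥0∞)

lemma Nint_le (x y : Zd d) (S : SpT d × SpT d) :
    Nint x y S ≤ ∑' z, ind (tr S.1) (z - x) * ind (tr S.2) (z - y) := by
  refine (ncard_le_tsum _).trans (ENNReal.tsum_le_tsum fun z => ?_)
  by_cases h1 : z - x ∈ tr S.1
  · by_cases h2 : z - y ∈ tr S.2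
    · rw [ind_of_mem h1, ind_of_mem h2, one_mul]; exact ind_le _ _
    · rw [ind_of_notMem (fun h => h2 h.2)]; exact zero_le
  · rw [ind_of_notMem (fun h => h1 h.1)]; exact zero_le

lemma tsum_pair_le (p r : ℕ → ℝ≥0∞) (x y : Zd d) (K : ℝ≥0∞)
    (hK : ∀ n, ∑' z, bh p r n (z - x) * bh p r n (z - y) ≤ K) :
    ∑' S : SpT d × SpT d, fullB p (qd d) r S.1 * fullB p (qd d) r S.2 * Nint x y S ≤ K := by
  classical
  rw [ENNReal.tsum_eq_iSup_sum]
  refine iSup_le fun F => ?_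
  choose N hN using fun S : SpT d => RW_eventually p (qd d) r S
  let n := F.sup (fun S => max (N S.1) (N S.2))
  have hn : ∀ S ∈ F, N S.1 ≤ n ∧ N S.2 ≤ n := by
    intro S hS
    have := Finset.le_sup (f := fun S : SpT d × SpT d => max (N S.1) (N S.2)) hS
    exact ⟨(le_max_left _ _).trans this, (le_max_right _ _).trans this⟩
  calc ∑ S ∈ F, fullB p (qd d) r S.1 * fullB p (qd d) r S.2 * Nint x y S
      = ∑ S ∈ F, RW p (qd d) r n S.1 * RW p (qd d) r n S.2 * Nint x y S := by
        apply Finset.sum_congr rfl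
        intro S hS
        rw [hN S.1 n (hn S hS).1, hN S.2 n (hn S hS).2]
    _ ≤ ∑' S : SpT d × SpT d, RW p (qd d) r n S.1 * RW p (qd d) r n S.2 * Nint x y S :=
        ENNReal.sum_le_tsum _
    _ ≤ ∑' S : SpT d × SpT d, RW p (qd d) r n S.1 * RW p (qd d) r n S.2 *
          ∑' z, ind (tr S.1) (z - x) * ind (tr S.2) (z - y) := by
        apply ENNReal.tsum_le_tsum; intro S
        gcongr
        exact Nint_le x y S
    _ = ∑' z, ∑' S : SpT d × SpT d, (RW p (qd d) r n S.1 * ind (tr S.1) (z - x)) *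
          (RW p (qd d) r n S.2 * ind (tr S.2) (z - y)) := by
        rw [ENNReal.tsum_comm]
        congr 1; funext S
        rw [← ENNReal.tsum_mul_left]
        congr 1; funext z
        ring
    _ = ∑' z, bh p r n (z - x) * bh p r n (z - y) := by
        congr 1; funext z
        rw [ENNReal.tsum_prod']
        simp_rw [ENNReal.tsum_mul_left, ENNReal.tsum_mul_right]
        rfl
    _ ≤ K := hK n

/-! Facts on the offspring law. -/

lemma mean_enn (p : PMF ℕ) (h : HasMeanOne p) : ∑' k : ℕ, (k : ℝ≥0∞) * p k = 1 := by
  unfold HasMeanOne at h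
  have hs : Summable fun k : ℕ => (k : ℝ) * (p k).toReal := by
    by_contra hn
    rw [tsum_eq_zero_of_not_summable hn] at h
    exact zero_ne_one h
  have := ENNReal.ofReal_tsum_of_nonneg (fun k : ℕ => by positivity) hs
  rw [h, ENNReal.ofReal_one] at this
  rw [this]
  congr 1; funext k
  rw [ENNReal.ofReal_mul (by positivity), ENNReal.ofReal_natCast,
    ENNReal.ofReal_toReal (p.apply_ne_top k)]

/-- The law of `Z̃ - 1`. -/
def rr (p : PMF ℕ) : ℕ → ℝ≥0∞ := fun k => ((k + 1 : ℕ) : ℝ≥0∞) * p (k + 1)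

lemma rr_total (p : PMF ℕ) (h : HasMeanOne p) : ∑' k, rr p k ≤ 1 := by
  rw [← mean_enn p h]
  exact ENNReal.tsum_comp_le_tsum_of_injective (add_left_injective 1)
    (fun k : ℕ => (k : ℝ≥0∞) * p k)

lemma rr_mean (p : PMF ℕ) (h : FiniteSecondMoment p) : ∑' k : ℕ, (k : ℝ≥0∞) * rr p k ≠ ⊤ := by
  unfold FiniteSecondMoment at h
  have h2 := ENNReal.ofReal_tsum_of_nonneg (fun k : ℕ => by positivity) h
  have h3 : ∑' k : ℕ, (k : ℝ≥0∞) ^ 2 * p k ≠ ⊤ := by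
    have : ∑' k : ℕ, (k : ℝ≥0∞) ^ 2 * p k
        = ∑' k : ℕ, ENNReal.ofReal ((k : ℝ) ^ 2 * (p k).toReal) := by
      congr 1; funext k
      rw [ENNReal.ofReal_mul (by positivity), ENNReal.ofReal_pow (by positivity),
        ENNReal.ofReal_natCast, ENNReal.ofReal_toReal (p.apply_ne_top k)]
    rw [this, ← h2]; exact ENNReal.ofReal_ne_top
  refine ne_top_of_le_ne_top h3 ?_
  refine le_trans (ENNReal.tsum_le_tsum fun k => ?_)
    (ENNReal.tsum_comp_le_tsum_of_injective (add_left_injective 1)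
      (fun k : ℕ => (k : ℝ≥0∞) ^ 2 * p k))
  unfold rr
  rw [← mul_assoc]
  gcongr
  rw [sq]
  gcongr
  omega

lemma c0_ne (p : PMF ℕ) (h : HasMeanOne p) (h1 : p 1 < 1) : c0 p ≠ 0 := by
  intro h0
  have hz : ∀ k, 2 ≤ k → p k = 0 := by
    intro k hk
    have := ENNReal.tsum_eq_zero.1 h0 k
    simpa [hk] using this
  have := mean_enn p h
  rw [tsum_eq_single 1] at this
  · simp only [Nat.cast_one, one_mul] at this
    exact h1.ne this
  · intro k hk
    rcases Nat.lt_or_ge k 2 with h2 | h2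
    · have : k = 0 := by omega
      simp [this]
    · simp [hz k h2]

lemma euclDist_ge_one {x y : Zd d} (h : x ≠ y) : 1 ≤ euclDist x y := by
  unfold euclDist
  rw [Real.one_le_sqrt]
  obtain ⟨i, hi⟩ := Function.ne_iff.1 h
  calc (1 : ℝ) ≤ ((x i : ℝ) - (y i : ℝ)) ^ 2 := by
        have h0 : x i - y i ≠ 0 := sub_ne_zero.2 hi
        have : 1 ≤ (x i - y i) ^ 2 := by
          have := pow_pos (abs_pos.2 h0) 2
          rw [sq_abs] at this
          linarith
        exact_mod_cast this
    _ ≤ _ := Finset.single_le_sum (f := fun i => ((x i : ℝ) - (y i : ℝ)) ^ 2)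
        (fun i _ => sq_nonneg _) (Finset.mem_univ i)

lemma main_bound (hd : 3 ≤ d) (p : PMF ℕ) (hmean : HasMeanOne p) (h1 : p 1 < 1)
    (hsq : FiniteSecondMoment p) : ∃ K : ℝ≥0∞, K ≠ ⊤ ∧ ∀ n (x y : Zd d), x ≠ y →
      ∑' z, bh p (rr p) n (z - x) * bh p (rr p) n (z - y)
        ≤ K * ENNReal.ofReal (Real.rpow (euclDist x y) (-((d : ℝ) - 4))) := by
  rcases Nat.lt_or_ge d 5 with h5 | h5
  · obtain ⟨K, hK, hb⟩ := inter_low (d := d) p (by omega) p.tsum_coe.le (mean_enn p hmean).le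
      (c0_ne p hmean h1) (rr p) (rr_total p hmean) (rr_mean p hsq)
    refine ⟨K, hK, fun n x y hxy => (hb n x y).trans ?_⟩
    refine le_mul_of_one_le_right zero_le ?_
    rw [ENNReal.one_le_ofReal]
    refine Real.one_le_rpow (euclDist_ge_one hxy) ?_
    have : (d : ℝ) ≤ 4 := by exact_mod_cast (by omega : d ≤ 4)
    linarith
  · exact inter_high (d := d) p h5 p.tsum_coe.le (mean_enn p hmean).le
      (rr p) (rr_total p hmean) (rr_mean p hsq)

/-! The probabilistic model. -/

lemma image_eq {x : Zd d} {S : SpT d} {t : Set (List ℕ)} {g : List ℕ → Zd d}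
    (ht : t = words S) (hg : ∀ v ∈ words S, g v = x + pos S v) :
    g '' t = {z | z - x ∈ tr S} := by
  subst ht
  ext z
  rw [← tr_eq]
  constructor
  · rintro ⟨v, hv, rfl⟩
    exact ⟨v, hv, by rw [hg v hv]; simp⟩
  · rintro ⟨v, hv, h⟩
    refine ⟨v, hv, ?_⟩
    rw [hg v hv, h]; simp

def Aset {p : PMF ℕ} {x y : Zd d} (M : TwoBushModel d p x y) (S : SpT d × SpT d) : Set M.Ω :=
  {ω | M.tree1 ω = words S.1 ∧ (∀ v ∈ words S.1, M.emb1 ω v = x + pos S.1 v) ∧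
    M.tree2 ω = words S.2 ∧ ∀ v ∈ words S.2, M.emb2 ω v = y + pos S.2 v}

lemma Aset_cover {p : PMF ℕ} {x y : Zd d} (M : TwoBushModel d p x y) (ω : M.Ω) :
    ∃ S, ω ∈ Aset M S := by
  obtain ⟨S1, h1, g1⟩ := surj _ _ (M.htree1 ω).1 (M.htree1 ω).2 le_rfl _ (M.hemb1 ω)
  obtain ⟨S2, h2, g2⟩ := surj _ _ (M.htree2 ω).1 (M.htree2 ω).2 le_rfl _ (M.hemb2 ω)
  refine ⟨(S1, S2), h1.symm, ?_, h2.symm, ?_⟩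
  · intro v hv
    rw [g1 v (h1 ▸ hv), M.hroot1]
  · intro v hv
    rw [g2 v (h2 ▸ hv), M.hroot2]

lemma Aset_prob {p : PMF ℕ} {x y : Zd d} (M : TwoBushModel d p x y) (S : SpT d × SpT d) :
    M.P (Aset M S) ≤ fullB p (qd d) (rr p) S.1 * fullB p (qd d) (rr p) S.2 := by
  rcases (Aset M S).eq_empty_or_nonempty with h | ⟨ω, hω⟩
  · rw [h]; simp
  · obtain ⟨a1, b1, a2, b2⟩ := hω
    have := M.hlaw (words S.1) (words S.2) (a1 ▸ (M.htree1 ω).1) (a1 ▸ (M.htree1 ω).2)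
      (a2 ▸ (M.htree2 ω).1) (a2 ▸ (M.htree2 ω).2) (M.emb1 ω) (M.emb2 ω)
      (M.hroot1 ω) (a1 ▸ M.hemb1 ω) (M.hroot2 ω) (a2 ▸ M.hemb2 ω)
    have e1 := fullB_eq p (qd d) S.1
    have e2 := fullB_eq p (qd d) S.2
    unfold rr
    rw [e1, e2]
    have hA : Aset M S = {ω' | M.tree1 ω' = words S.1 ∧
        (∀ v ∈ words S.1, M.emb1 ω' v = M.emb1 ω v) ∧
        M.tree2 ω' = words S.2 ∧ ∀ v ∈ words S.2, M.emb2 ω' v = M.emb2 ω v} := by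
      ext ω'
      constructor
      · rintro ⟨u1, u2, u3, u4⟩
        exact ⟨u1, fun v hv => (u2 v hv).trans (b1 v hv).symm, u3,
          fun v hv => (u4 v hv).trans (b2 v hv).symm⟩
      · rintro ⟨u1, u2, u3, u4⟩
        exact ⟨u1, fun v hv => (u2 v hv).trans (b1 v hv), u3,
          fun v hv => (u4 v hv).trans (b2 v hv)⟩
    rw [hA, this, pow_add]
    apply le_of_eq
    unfold qd
    ring

lemma Aset_inter {p : PMF ℕ} {x y : Zd d} (M : TwoBushModel d p x y) {S : SpT d × SpT d}
    {ω : M.Ω} (h : ω ∈ Aset M S) :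
    (M.emb1 ω '' M.tree1 ω) ∩ (M.emb2 ω '' M.tree2 ω)
      = {z | z - x ∈ tr S.1} ∩ {z | z - y ∈ tr S.2} := by
  obtain ⟨a1, b1, a2, b2⟩ := h
  rw [image_eq a1 b1, image_eq a2 b2]

lemma sum_bound {p : PMF ℕ} {x y : Zd d} (M : TwoBushModel d p x y) (K : ℝ≥0∞)
    (hK : ∀ n, ∑' z, bh p (rr p) n (z - x) * bh p (rr p) n (z - y) ≤ K) :
    ∑' S : SpT d × SpT d, Nint x y S * M.P (Aset M S) ≤ K := by
  refine le_trans (ENNReal.tsum_le_tsum fun S => ?_) (tsum_pair_le p (rr p) x y K hK)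
  rw [mul_comm]
  gcongr
  exact Aset_prob M S

lemma lintegral_bound {p : PMF ℕ} {x y : Zd d} (M : TwoBushModel d p x y) (K : ℝ≥0∞)
    (hK : ∀ n, ∑' z, bh p (rr p) n (z - x) * bh p (rr p) n (z - y) ≤ K) :
    @lintegral M.Ω M.mΩ M.P (fun ω =>
      ((((M.emb1 ω '' M.tree1 ω) ∩ (M.emb2 ω '' M.tree2 ω)).ncard : ℕ) : ℝ≥0∞)) ≤ K := by
  letI := M.mΩ
  refine le_trans ?_ (sum_bound M K hK)
  calc _ ≤ ∫⁻ ω, ∑' S : SpT d × SpT d,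
          (toMeasurable M.P (Aset M S)).indicator (fun _ => Nint x y S) ω ∂M.P := by
        apply lintegral_mono
        intro ω
        obtain ⟨S, hS⟩ := Aset_cover M ω
        refine le_trans ?_ (ENNReal.le_tsum S)
        rw [indicator_of_mem (subset_toMeasurable _ _ hS)]
        simp only
        rw [Aset_inter M hS]
        exact le_rfl
    _ = ∑' S : SpT d × SpT d, Nint x y S * M.P (Aset M S) := by
        rw [lintegral_tsum]
        · congr 1; funext S
          rw [lintegral_indicator_const (measurableSet_toMeasurable _ _), measure_toMeasurable]
        · intro S
          exact (measurable_const.indicator (measurableSet_toMeasurable _ _)).aemeasurable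

lemma prob_bound {p : PMF ℕ} {x y : Zd d} (M : TwoBushModel d p x y) (K : ℝ≥0∞)
    (hK : ∀ n, ∑' z, bh p (rr p) n (z - x) * bh p (rr p) n (z - y) ≤ K) :
    M.P {ω | (M.emb1 ω '' M.tree1 ω) ∩ (M.emb2 ω '' M.tree2 ω) ≠ ∅} ≤ K := by
  letI := M.mΩ
  classical
  refine le_trans ?_ (sum_bound M K hK)
  have hsub : {ω | (M.emb1 ω '' M.tree1 ω) ∩ (M.emb2 ω '' M.tree2 ω) ≠ ∅}
      ⊆ ⋃ S : SpT d × SpT d, (if Nint x y S = 0 then ∅ else Aset M S) := by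
    intro ω hω
    obtain ⟨S, hS⟩ := Aset_cover M ω
    rw [mem_iUnion]
    refine ⟨S, ?_⟩
    have hne : Nint x y S ≠ 0 := by
      have hω' : (M.emb1 ω '' M.tree1 ω) ∩ (M.emb2 ω '' M.tree2 ω) ≠ ∅ := hω
      have hfin : ((M.emb1 ω '' M.tree1 ω) ∩ (M.emb2 ω '' M.tree2 ω)).Finite :=
        ((M.htree1 ω).2.image _).subset inter_subset_left
      unfold Nint
      rw [← Aset_inter M hS]
      rw [Nat.cast_ne_zero]
      intro h0
      exact hω' ((Set.ncard_eq_zero hfin).1 h0)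
    rw [if_neg hne]; exact hS
  refine (measure_mono hsub).trans ((measure_iUnion_le _).trans ?_)
  apply ENNReal.tsum_le_tsum
  intro S
  split_ifs with h
  · simp
  · refine le_mul_of_one_le_left zero_le ?_
    unfold Nint at h ⊢
    rw [← ne_eq, Nat.cast_ne_zero] at h
    exact_mod_cast Nat.one_le_iff_ne_zero.2 h

end final

/-!
STATEMENT 14.  Fix `d ≥ 3`, `E[Z²] < ∞`.  There exists `C < ∞` such that for
`x ≠ y` and independent `B(x)`, `B(y)`:
`E[|B(x) ∩ B(y)|] ≤ C |x-y|^{-(d-4)}` and hence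
`q(x,y) = P[B(x) ∩ B(y) ≠ ∅] ≤ C |x-y|^{-(d-4)}`.
-/
theorem expected_intersection_of_independent_bushes
    (d : ℕ) (hd : 3 ≤ d) (p : PMF ℕ)
    (hmean : HasMeanOne p) (hnontriv : p 1 < 1)
    (hsq : FiniteSecondMoment p) (hvar : PosVariance p) :
    ∃ C : ℝ, ∀ (x y : Zd d), x ≠ y → ∀ M : TwoBushModel d p x y,
      (∫ ω, (((M.emb1 ω '' M.tree1 ω) ∩ (M.emb2 ω '' M.tree2 ω)).ncard : ℝ) ∂M.P)
          ≤ C * Real.rpow (euclDist x y) (-((d : ℝ) - 4)) ∧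
      (M.P {ω | (M.emb1 ω '' M.tree1 ω) ∩ (M.emb2 ω '' M.tree2 ω) ≠ ∅}).toReal
          ≤ C * Real.rpow (euclDist x y) (-((d : ℝ) - 4)) := by
  obtain ⟨K, hK, hb⟩ := main_bound hd p hmean hnontriv hsq
  refine ⟨K.toReal, fun x y hxy M => ?_⟩
  letI := M.mΩ
  have hpos : 0 ≤ Real.rpow (euclDist x y) (-((d : ℝ) - 4)) :=
    Real.rpow_nonneg (Real.sqrt_nonneg _) _
  set R := Real.rpow (euclDist x y) (-((d : ℝ) - 4)) with hR
  have hb' := fun n => hb n x y hxy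
  have htop : K * ENNReal.ofReal R ≠ ⊤ := ENNReal.mul_ne_top hK ENNReal.ofReal_ne_top
  have hreal : (K * ENNReal.ofReal R).toReal = K.toReal * R := by
    rw [ENNReal.toReal_mul, ENNReal.toReal_ofReal hpos]
  constructor
  · rw [← hreal]
    by_cases hintg : Integrable (fun ω =>
        (((M.emb1 ω '' M.tree1 ω) ∩ (M.emb2 ω '' M.tree2 ω)).ncard : ℝ)) M.P
    · rw [integral_eq_lintegral_of_nonneg_ae
        (Filter.Eventually.of_forall fun ω => Nat.cast_nonneg _) hintg.aestronglyMeasurable]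
      refine ENNReal.toReal_mono htop ?_
      simp_rw [ENNReal.ofReal_natCast]
      exact lintegral_bound M _ hb'
    · rw [integral_undef hintg]
      exact ENNReal.toReal_nonneg
  · rw [← hreal]
    exact ENNReal.toReal_mono htop (prob_bound M _ hb')
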